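/- Variation of the determinant of the characteristic matrix under deformations of Γ: under the stated hypotheses, t ↦ det G(t) is differentiable and (d/dt) log det G(t) = (1/2πi) ∮_{∂𝔻} Tr( R(z,t)^{-1} ∂_z R(z,t) · ∂_t Γ(z,t) · Γ(z,t)^{-1} ) dz. -/

import Mathlib

/-!
The entries of `G(t)` are explicit. Outside the disks a row `v_{c,μ,ℓ}` is minus the principal part
at `c` of `e_μᵀ Γ⁻¹ (z - c)^{-ℓ}` (`Cm_eq_vv`), and linear independence of the `w`'s forces the
coefficients of the expansion of `C₋[v S]` to be its Laurent coefficients, that is, contour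
integrals of `v Γ` against powers of `z - c` (`G_formula`). Such integrals can be differentiated in
`t` under the integral sign (`entry_hasDerivAt`), the derivative of a row being the same polar row
built from `∂ₜΓ⁻¹ = -Γ⁻¹ ∂ₜΓ Γ⁻¹`.

The point is that `∂ₜG = G M` for a matrix `M` with the required trace. For `ζ` off the poles, the
divided difference `(R(z) - R(ζ)) / (z - ζ)` is, as a function of `z`, a rational function vanishing
at infinity, and since `R Γ D` is regular at each pole its polar parts are spanned by the `v_q`; by
Liouville, `(R(z) - R(ζ)) / (z - ζ) = ∑ q, κ_q(ζ) v_q(z)` with column coefficients `κ_q`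
(`expansion`). Put `Ψ = ∂ₜΓ Γ⁻¹` and
`M_{q'q} = (1/2πi) ∮ v_q(ζ) Ψ(ζ) R(ζ)⁻¹ κ_{q'}(ζ) dζ`.
Inside the disks Cauchy's formula gives
`∑ q', M_{q'q} v_{q'}(z) = (v_q Ψ + ∂ₜv_q)(z) - (1/2πi) ∮ v_q Ψ R⁻¹ (ζ) / (ζ - z) dζ · R(z)`,
because `v_q Ψ + ∂ₜv_q` has no pole there, while the polar rows `∂ₜv_q` project to zero. Multiplied
by `Γ D` on the right, the last term is regular, so it does not contribute to the Laurent
coefficients which define `G`, and `(v_q Ψ + ∂ₜv_q) Γ = ∂ₜ(v_q Γ)`; this is `∂ₜG = G M` (`core`).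
On the diagonal the divided difference is `∂_z R`, hence
`Tr M = (1/2πi) ∮ Tr (R⁻¹ ∂_z R ∂ₜΓ Γ⁻¹)`, and Jacobi's formula (`hasDerivAt_det`) concludes.
-/

open Filter Asymptotics
open scoped Classical

noncomputable section

/-- Square `N × N` complex matrices. -/
abbrev Mat (N : ℕ) := Matrix (Fin N) (Fin N) ℂ

/-- `f` extends analytically to the point `c`. -/
def ExtAt (f : ℂ → ℂ) (c : ℂ) : Prop :=
  ∃ g : ℂ → ℂ, AnalyticAt ℂ g c ∧ ∀ᶠ z in nhdsWithin c {c}ᶜ, g z = f z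

section Setup

variable (N n : ℕ) (cs : Fin n → ℂ) (rd : Fin n → ℝ) (Nc : Fin n → Fin N → ℤ)

/-- The locally defined diagonal matrix `D`, equal to `(z−c)^{N_c}` on the disk
`𝔻_c` (radius `rd`) and to `1` elsewhere. -/
def Dloc (z : ℂ) : Mat N :=
  Matrix.diagonal fun μ =>
    ∏ i, (if z ∈ Metric.closedBall (cs i) (rd i) then (z - cs i) ^ Nc i μ else 1)

/-- The Cauchy projection `C₋[f](z) = (1/2πi)∮_{∂𝔻} f(ζ)/(ζ−z) dζ` over the
circles of radii `ρ`. -/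
def Cm (ρ : Fin n → ℝ) (f : ℂ → Fin N → ℂ) (z : ℂ) : Fin N → ℂ :=
  fun μ => ∑ i, (2 * (Real.pi : ℂ) * Complex.I)⁻¹ *
    (∮ ζ in C(cs i, ρ i), f ζ μ / (ζ - z))

/-- The exterior of the disks of radii `ρ`. -/
def ExtOf (ρ : Fin n → ℝ) : Set ℂ := {z : ℂ | ∀ i, ρ i < dist z (cs i)}

end Setup

/-! ### Circle integrals, Taylor coefficients and polar parts -/

namespace VarDet

open Metric Set Complex MeasureTheory

/-- Polar part at `c`, of order at most `l` and with a global minus sign, whose coefficients are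
the first `l` Taylor coefficients `a` of a function `f`: it is minus the principal part of
`f z / (z - c) ^ l`. -/
def pp (c : ℂ) (l : ℕ) (a : ℕ → ℂ) (z : ℂ) : ℂ :=
  -∑ j ∈ Finset.range l, a j * ((z - c) ^ (l - j))⁻¹

/-- The `j`-th Taylor coefficient of `f` at `c`, as an integral over the circle of radius `ρ`. -/
def tc (c : ℂ) (ρ : ℝ) (f : ℂ → ℂ) (j : ℕ) : ℂ :=
  (2 * (Real.pi : ℂ) * I)⁻¹ * ∮ ξ in C(c, ρ), f ξ * ((ξ - c) ^ (j + 1))⁻¹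

lemma tpi_ne : (2 * (Real.pi : ℂ) * I) ≠ 0 := by
  simp [Real.pi_ne_zero]

lemma cauchy_zero {U : Set ℂ} {c : ℂ} {ρ : ℝ} (hρ : 0 ≤ ρ) (hU : IsOpen U)
    (hb : closedBall c ρ ⊆ U) {f : ℂ → ℂ} (hf : DifferentiableOn ℂ f U) :
    (∮ ζ in C(c, ρ), f ζ) = 0 :=
  circleIntegral_eq_zero_of_differentiable_on_off_countable hρ countable_empty
    (hf.continuousOn.mono hb) fun _ hz =>
      (hf.differentiableAt (hU.mem_nhds (hb (ball_subset_closedBall hz.1))))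

lemma cauchy_formula {U : Set ℂ} {c : ℂ} {ρ : ℝ} (hU : IsOpen U)
    (hb : closedBall c ρ ⊆ U) {f : ℂ → ℂ} (hf : DifferentiableOn ℂ f U) {w : ℂ}
    (hw : w ∈ ball c ρ) :
    (∮ ζ in C(c, ρ), f ζ / (ζ - w)) = (2 * (Real.pi : ℂ) * I) * f w :=
  circleIntegral_div_sub_of_differentiable_on_off_countable countable_empty hw
    (hf.continuousOn.mono hb) fun _ hz =>
      (hf.differentiableAt (hU.mem_nhds (hb (ball_subset_closedBall hz.1))))

lemma circ_pow_center {c : ℂ} {ρ : ℝ} (hρ : 0 < ρ) (m : ℕ) :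
    (∮ ζ in C(c, ρ), ((ζ - c) ^ (m + 1))⁻¹) = if m = 0 then 2 * (Real.pi : ℂ) * I else 0 := by
  split_ifs with h
  · subst h
    simpa using circleIntegral.integral_sub_inv_of_mem_ball (mem_ball_self hρ)
  · have := circleIntegral.integral_sub_zpow_of_ne (n := -((m : ℤ) + 1)) (by omega) c c ρ
    rw [← this]
    refine circleIntegral.integral_congr hρ.le fun ζ _ => ?_
    simp only [zpow_neg]
    norm_cast

lemma sphere_ne {c z : ℂ} {ρ : ℝ} (h : z ∈ sphere c ρ) (hρ : 0 < ρ) : z ≠ c := by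
  rintro rfl
  simp at h
  exact hρ.ne h

lemma contOn_invpow {c : ℂ} {ρ : ℝ} (hρ : 0 < ρ) (m : ℕ) :
    ContinuousOn (fun ζ : ℂ => ((ζ - c) ^ m)⁻¹) (sphere c ρ) := by
  refine ContinuousOn.inv₀ (by fun_prop) fun z hz => pow_ne_zero _ (sub_ne_zero.2 (sphere_ne hz hρ))

lemma contOn_invsub {s : Set ℂ} {z : ℂ} (hz : z ∉ s) :
    ContinuousOn (fun ζ : ℂ => (ζ - z)⁻¹) s := by
  refine ContinuousOn.inv₀ (by fun_prop) fun w hw => sub_ne_zero.2 ?_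
  rintro rfl
  exact hz hw

lemma circ_step {c z : ℂ} {ρ : ℝ} (hρ : 0 < ρ) (hz : z ∉ sphere c ρ) (hzc : z ≠ c) (m : ℕ) :
    (∮ ζ in C(c, ρ), ((ζ - c) ^ (m + 1))⁻¹ / (ζ - z)) =
      (z - c)⁻¹ * ((∮ ζ in C(c, ρ), ((ζ - c) ^ m)⁻¹ / (ζ - z))
        - ∮ ζ in C(c, ρ), ((ζ - c) ^ (m + 1))⁻¹) := by
  have h1 : CircleIntegrable (fun ζ => ((ζ - c) ^ m)⁻¹ / (ζ - z)) c ρ :=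
    ((contOn_invpow hρ m).mul (contOn_invsub hz)).circleIntegrable hρ.le
  have h2 : CircleIntegrable (fun ζ => ((ζ - c) ^ (m + 1))⁻¹) c ρ :=
    (contOn_invpow hρ _).circleIntegrable hρ.le
  rw [← circleIntegral.integral_sub h1 h2, ← circleIntegral.integral_const_mul]
  refine circleIntegral.integral_congr hρ.le fun ζ hζ => ?_
  have e1 : ζ - c ≠ 0 := sub_ne_zero.2 (sphere_ne hζ hρ)
  have e2 : ζ - z ≠ 0 := sub_ne_zero.2 (fun h => hz (h ▸ hζ))
  have e3 : z - c ≠ 0 := sub_ne_zero.2 hzc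
  field_simp
  ring

lemma circ_out {c z : ℂ} {ρ : ℝ} (hρ : 0 < ρ) (hz : z ∉ closedBall c ρ) (m : ℕ) :
    (∮ ζ in C(c, ρ), ((ζ - c) ^ (m + 1))⁻¹ / (ζ - z)) =
      -(2 * (Real.pi : ℂ) * I) * ((z - c) ^ (m + 1))⁻¹ := by
  have hs : z ∉ sphere c ρ := fun h => hz (sphere_subset_closedBall h)
  have hc : z ≠ c := fun h => hz (h ▸ mem_closedBall_self hρ.le)
  induction m with
  | zero =>
    rw [circ_step hρ hs hc, circ_pow_center hρ]
    have : (∮ ζ in C(c, ρ), ((ζ - c) ^ 0)⁻¹ / (ζ - z)) = 0 := by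
      refine cauchy_zero (U := {z}ᶜ) hρ.le isOpen_compl_singleton (by
        intro w hw h; exact hz (h ▸ hw)) ?_
      intro w hw
      have : w - z ≠ 0 := sub_ne_zero.2 hw
      refine DifferentiableAt.differentiableWithinAt ?_
      simp only [pow_zero]
      fun_prop (disch := assumption)
    rw [this]
    simp
    ring
  | succ m ih =>
    rw [circ_step hρ hs hc, ih, circ_pow_center hρ]
    have e3 : z - c ≠ 0 := sub_ne_zero.2 hc
    simp
    field_simp
    ring

lemma circ_in {c z : ℂ} {ρ : ℝ} (hz : z ∈ ball c ρ) (hc : z ≠ c) (m : ℕ) :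
    (∮ ζ in C(c, ρ), ((ζ - c) ^ (m + 1))⁻¹ / (ζ - z)) = 0 := by
  have hρ : 0 < ρ := dist_nonneg.trans_lt hz
  have hs : z ∉ sphere c ρ := fun h => (mem_ball.1 hz).ne (mem_sphere.1 h)
  induction m with
  | zero =>
    rw [circ_step hρ hs hc, circ_pow_center hρ]
    have := circleIntegral.integral_sub_inv_of_mem_ball hz
    simp [this]
  | succ m ih =>
    rw [circ_step hρ hs hc, ih, circ_pow_center hρ]
    simp

/-- Taylor expansion with remainder divisible by `(z - c) ^ l`, valid for every `z`: outside `U` the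
remainder is defined by the identity itself. -/
lemma taylor {U : Set ℂ} {c : ℂ} {ρ : ℝ} (hρ : 0 < ρ) (hU : IsOpen U)
    (hb : closedBall c ρ ⊆ U) {f : ℂ → ℂ} (hf : DifferentiableOn ℂ f U) (l : ℕ) :
    ∃ h : ℂ → ℂ, DifferentiableOn ℂ h U ∧ ∀ z, f z =
      (∑ j ∈ Finset.range l, tc c ρ f j * (z - c) ^ j) + (z - c) ^ l * h z := by
  induction l with
  | zero => exact ⟨f, hf, by simp⟩
  | succ l ih =>
    obtain ⟨h, hh, e⟩ := ih
    have hcU : U ∈ nhds c := hU.mem_nhds (hb (mem_closedBall_self hρ.le))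
    refine ⟨dslope h c, (differentiableOn_dslope hcU).2 hh, fun z => ?_⟩
    have key : tc c ρ f l = h c := by
      unfold tc
      have e1 : (∮ ξ in C(c, ρ), f ξ * ((ξ - c) ^ (l + 1))⁻¹) =
          ∮ ξ in C(c, ρ), ((∑ j ∈ Finset.range l, tc c ρ f j * ((ξ - c) ^ ((l - j - 1) + 1 + 1))⁻¹)
            + h ξ / (ξ - c)) := by
        refine circleIntegral.integral_congr hρ.le fun ξ hξ => ?_
        have e1 : ξ - c ≠ 0 := sub_ne_zero.2 (sphere_ne hξ hρ)
        rw [e ξ, add_mul, Finset.sum_mul]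
        congr 1
        · refine Finset.sum_congr rfl fun j hj => ?_
          have hj := Finset.mem_range.1 hj
          have : l + 1 = j + ((l - j - 1) + 1 + 1) := by omega
          rw [this, pow_add]
          field_simp
        · field_simp
          ring
      have hc1 : ∀ j, CircleIntegrable
          (fun ξ => tc c ρ f j * ((ξ - c) ^ ((l - j - 1) + 1 + 1))⁻¹) c ρ := fun j =>
        (continuousOn_const.mul (contOn_invpow hρ _)).circleIntegrable hρ.le
      have hc2 : CircleIntegrable (fun ξ => h ξ / (ξ - c)) c ρ :=
        (((hh.continuousOn.mono hb).mono sphere_subset_closedBall).mul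
          (contOn_invsub fun h => sphere_ne h hρ rfl)).circleIntegrable hρ.le
      rw [e1, circleIntegral.integral_add
        (CircleIntegrable.fun_sum _ fun j _ => hc1 j) hc2,
        circleIntegral.integral_fun_sum fun j _ => hc1 j,
        cauchy_formula hU hb hh (mem_ball_self hρ)]
      have : ∀ j ∈ Finset.range l,
          (∮ ξ in C(c, ρ), tc c ρ f j * ((ξ - c) ^ ((l - j - 1) + 1 + 1))⁻¹) = 0 := by
        intro j _
        rw [circleIntegral.integral_const_mul, circ_pow_center hρ]
        simp
      rw [Finset.sum_eq_zero this, zero_add, inv_mul_cancel_left₀ tpi_ne]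
    have h3 : h z = h c + (z - c) * dslope h c z := by
      have := sub_smul_dslope h c z
      rw [smul_eq_mul] at this
      rw [this]; ring
    rw [Finset.sum_range_succ, key, e z, h3]
    ring

/-- Adding `pp` to `f z / (z - c) ^ l` leaves the Taylor remainder. -/
lemma pp_ext {c z : ℂ} (hz : z ≠ c) (l : ℕ) (a : ℕ → ℂ) (x h : ℂ)
    (e : x = (∑ j ∈ Finset.range l, a j * (z - c) ^ j) + (z - c) ^ l * h) :
    x * ((z - c) ^ l)⁻¹ + pp c l a z = h := by
  have e3 : z - c ≠ 0 := sub_ne_zero.2 hz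
  rw [e, pp, add_mul, Finset.sum_mul]
  have : ∀ j ∈ Finset.range l, a j * (z - c) ^ j * ((z - c) ^ l)⁻¹ = a j * ((z - c) ^ (l - j))⁻¹ := by
    intro j hj
    have hj := Finset.mem_range.1 hj
    have : (z - c) ^ l = (z - c) ^ j * (z - c) ^ (l - j) := by
      rw [← pow_add]; congr 1; omega
    rw [this]
    field_simp
  rw [Finset.sum_congr rfl this]
  field_simp
  ring

lemma pp_contOn {c : ℂ} {s : Set ℂ} (hs : c ∉ s) (l : ℕ) (a : ℕ → ℂ) : ContinuousOn (pp c l a) s := by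
  unfold pp
  refine ContinuousOn.neg (continuousOn_finsetSum _ fun j _ => continuousOn_const.mul ?_)
  refine ContinuousOn.inv₀ (by fun_prop) fun z hz => pow_ne_zero _ (sub_ne_zero.2 ?_)
  rintro rfl
  exact hs hz

lemma pp_diff {c z : ℂ} (hz : z ≠ c) (l : ℕ) (a : ℕ → ℂ) : DifferentiableAt ℂ (pp c l a) z := by
  unfold pp
  have : z - c ≠ 0 := sub_ne_zero.2 hz
  refine DifferentiableAt.neg (DifferentiableAt.fun_sum fun j _ => ?_)
  have h2 := pow_ne_zero (l - j) this
  fun_prop (disch := assumption)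

lemma pp_circ_out {c z : ℂ} {ρ : ℝ} (hρ : 0 < ρ) (hz : z ∉ closedBall c ρ) (l : ℕ) (a : ℕ → ℂ) :
    (∮ ζ in C(c, ρ), pp c l a ζ / (ζ - z)) = -(2 * (Real.pi : ℂ) * I) * pp c l a z := by
  have hs : z ∉ sphere c ρ := fun h => hz (sphere_subset_closedBall h)
  have e : ∀ ζ, pp c l a ζ / (ζ - z) =
      ∑ j ∈ Finset.range l, (-a j) * (((ζ - c) ^ (l - j))⁻¹ / (ζ - z)) := by
    intro ζ
    simp only [pp, neg_mul, Finset.sum_neg_distrib, neg_div, Finset.sum_div, mul_div_assoc]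
  simp only [e]
  rw [circleIntegral.integral_fun_sum]
  · unfold pp
    rw [mul_neg, neg_mul, neg_neg, Finset.mul_sum]
    refine Finset.sum_congr rfl fun j hj => ?_
    have hj := Finset.mem_range.1 hj
    obtain ⟨m, hm⟩ : ∃ m, l - j = m + 1 := ⟨l - j - 1, by omega⟩
    rw [circleIntegral.integral_const_mul, hm, circ_out hρ hz]
    ring
  · intro j _
    exact (continuousOn_const.mul
      ((contOn_invpow hρ _).mul (contOn_invsub hs))).circleIntegrable hρ.le

lemma pp_circ_in {c z : ℂ} {ρ : ℝ} (hz : z ∈ ball c ρ) (hc : z ≠ c) (l : ℕ) (a : ℕ → ℂ) :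
    (∮ ζ in C(c, ρ), pp c l a ζ / (ζ - z)) = 0 := by
  have hρ : 0 < ρ := dist_nonneg.trans_lt hz
  have hs : z ∉ sphere c ρ := fun h => (mem_ball.1 hz).ne (mem_sphere.1 h)
  have e : ∀ ζ, pp c l a ζ / (ζ - z) =
      ∑ j ∈ Finset.range l, (-a j) * (((ζ - c) ^ (l - j))⁻¹ / (ζ - z)) := by
    intro ζ
    simp only [pp, neg_mul, Finset.sum_neg_distrib, neg_div, Finset.sum_div, mul_div_assoc]
  simp only [e]
  rw [circleIntegral.integral_fun_sum]
  · refine Finset.sum_eq_zero fun j hj => ?_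
    have hj := Finset.mem_range.1 hj
    obtain ⟨m, hm⟩ : ∃ m, l - j = m + 1 := ⟨l - j - 1, by omega⟩
    rw [circleIntegral.integral_const_mul, hm, circ_in hz hc, mul_zero]
  · intro j _
    exact (continuousOn_const.mul
      ((contOn_invpow hρ _).mul (contOn_invsub hs))).circleIntegrable hρ.le

/-- The Cauchy projection of `f / (· - c) ^ l` at an exterior point is minus its principal part. -/
lemma cm_pp {U : Set ℂ} {c : ℂ} {ρ : ℝ} (hρ : 0 < ρ) (hU : IsOpen U)
    (hb : closedBall c ρ ⊆ U) {f : ℂ → ℂ} (hf : DifferentiableOn ℂ f U) (l : ℕ) {z : ℂ}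
    (hz : z ∉ closedBall c ρ) :
    (∮ ξ in C(c, ρ), f ξ * ((ξ - c) ^ l)⁻¹ / (ξ - z)) =
      (2 * (Real.pi : ℂ) * I) * pp c l (tc c ρ f) z := by
  have hs : z ∉ sphere c ρ := fun h => hz (sphere_subset_closedBall h)
  obtain ⟨h, hh, e⟩ := taylor hρ hU hb hf l
  have e1 : (∮ ξ in C(c, ρ), f ξ * ((ξ - c) ^ l)⁻¹ / (ξ - z)) =
      ∮ ξ in C(c, ρ), (h ξ / (ξ - z) - pp c l (tc c ρ f) ξ / (ξ - z)) := by
    refine circleIntegral.integral_congr hρ.le fun ξ hξ => ?_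
    rw [← pp_ext (sphere_ne hξ hρ) l _ _ _ (e ξ)]
    ring
  rw [e1, circleIntegral.integral_sub, pp_circ_out hρ hz]
  · have : (∮ ξ in C(c, ρ), h ξ / (ξ - z)) = 0 := by
      refine cauchy_zero (U := U ∩ {z}ᶜ) hρ.le (hU.inter isOpen_compl_singleton) (fun w hw =>
        ⟨hb hw, fun h => hz (h ▸ hw)⟩) ?_
      refine (hh.mono inter_subset_left).div (by fun_prop) fun w hw => sub_ne_zero.2 hw.2
    rw [this]; ring
  · exact (((hh.continuousOn.mono hb).mono sphere_subset_closedBall).mul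
          (contOn_invsub hs)).circleIntegrable hρ.le
  · exact ((pp_contOn (fun h => sphere_ne h hρ rfl) _ _).mul
          (contOn_invsub hs)).circleIntegrable hρ.le

/-- Differentiation under the circle integral. -/
lemma hasDerivAt_circ {𝕜 : Type*} [RCLike 𝕜] [NormedAlgebra 𝕜 ℂ] {c : ℂ} {ρ : ℝ} (hρ : 0 ≤ ρ)
    {U : Set 𝕜} (hU : IsOpen U)
    {f f' : ℂ → 𝕜 → ℂ} (hf : ∀ s ∈ U, ContinuousOn (fun z => f z s) (sphere c ρ))
    (hf' : ContinuousOn (fun p : ℂ × 𝕜 => f' p.1 p.2) (sphere c ρ ×ˢ U))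
    (hd : ∀ z ∈ sphere c ρ, ∀ s ∈ U, HasDerivAt (fun s => f z s) (f' z s) s) {t : 𝕜} (ht : t ∈ U) :
    HasDerivAt (fun s => ∮ z in C(c, ρ), f z s) (∮ z in C(c, ρ), f' z t) t := by
  obtain ⟨δ, hδ, hbU⟩ := nhds_basis_closedBall.mem_iff.1 (hU.mem_nhds ht)
  have hcomp : IsCompact (sphere c ρ ×ˢ closedBall t δ) :=
    (isCompact_sphere c ρ).prod (isCompact_closedBall t δ)
  obtain ⟨B, hB⟩ := hcomp.exists_bound_of_continuousOn (hf'.mono (prod_mono le_rfl hbU))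
  have hm : ∀ θ, circleMap c ρ θ ∈ sphere c ρ := fun θ => circleMap_mem_sphere c hρ θ
  have hcd : Continuous (fun θ => deriv (circleMap c ρ) θ) := by
    simp only [deriv_circleMap]
    fun_prop
  have hF : ∀ g : ℂ → ℂ, ContinuousOn g (sphere c ρ) →
      Continuous fun θ => deriv (circleMap c ρ) θ • g (circleMap c ρ θ) := fun g hg =>
    hcd.smul (hg.comp_continuous (continuous_circleMap c ρ) hm)
  refine (intervalIntegral.hasDerivAt_integral_of_dominated_loc_of_deriv_le
    (F := fun s θ => deriv (circleMap c ρ) θ • f (circleMap c ρ θ) s)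
    (F' := fun s θ => deriv (circleMap c ρ) θ • f' (circleMap c ρ θ) s)
    (bound := fun _ => |ρ| * B)
    (closedBall_mem_nhds t hδ) ?_ ?_ ?_ ?_ ?_ ?_).2
  · filter_upwards [hU.mem_nhds ht] with s hs
    exact (hF _ (hf s hs)).aestronglyMeasurable
  · exact (hF _ (hf t ht)).intervalIntegrable _ _
  · refine (hF (fun z => f' z t) ?_).aestronglyMeasurable
    exact hf'.comp (f := fun z => (z, t)) (by fun_prop) fun z hz => ⟨hz, ht⟩
  · refine Eventually.of_forall fun θ _ s hs => ?_
    rw [norm_smul]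
    refine mul_le_mul ?_ (hB (circleMap c ρ θ, s) ⟨hm θ, hs⟩) (norm_nonneg _) (abs_nonneg _)
    simp [deriv_circleMap]
  · exact intervalIntegrable_const
  · refine Eventually.of_forall fun θ _ s hs => ?_
    exact (hd _ (hm θ) s (hbU hs)).const_mul _

end VarDet

/-! ### Removable singularities and Liouville's theorem -/

namespace VarDet

open Metric Set Complex MeasureTheory

lemma _root_.ExtAt.of_analytic {f : ℂ → ℂ} {c : ℂ} (h : AnalyticAt ℂ f c) : ExtAt f c :=
  ⟨f, h, Eventually.of_forall fun _ => rfl⟩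

lemma _root_.ExtAt.congr {f g : ℂ → ℂ} {c : ℂ} (h : ExtAt f c)
    (e : ∀ᶠ z in nhdsWithin c {c}ᶜ, f z = g z) : ExtAt g c := by
  obtain ⟨F, hF, hF2⟩ := h
  exact ⟨F, hF, by filter_upwards [hF2, e] with z h1 h2 using h1.trans h2⟩

lemma _root_.ExtAt.add {f g : ℂ → ℂ} {c : ℂ} (hf : ExtAt f c) (hg : ExtAt g c) :
    ExtAt (fun z => f z + g z) c := by
  obtain ⟨F, hF, hF2⟩ := hf
  obtain ⟨G, hG, hG2⟩ := hg
  exact ⟨fun z => F z + G z, hF.add hG, by filter_upwards [hF2, hG2] with z h1 h2; rw [h1, h2]⟩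

lemma _root_.ExtAt.mul {f g : ℂ → ℂ} {c : ℂ} (hf : ExtAt f c) (hg : ExtAt g c) :
    ExtAt (fun z => f z * g z) c := by
  obtain ⟨F, hF, hF2⟩ := hf
  obtain ⟨G, hG, hG2⟩ := hg
  exact ⟨fun z => F z * G z, hF.mul hG, by filter_upwards [hF2, hG2] with z h1 h2; rw [h1, h2]⟩

lemma _root_.ExtAt.const {c : ℂ} (a : ℂ) : ExtAt (fun _ => a) c := .of_analytic analyticAt_const

lemma _root_.ExtAt.sum {ι : Type*} (s : Finset ι) {f : ι → ℂ → ℂ} {c : ℂ} (hf : ∀ i ∈ s, ExtAt (f i) c) :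
    ExtAt (fun z => ∑ i ∈ s, f i z) c := by
  induction s using Finset.induction_on with
  | empty => simpa using ExtAt.const (c := c) 0
  | insert a s ha ih =>
    simp only [Finset.sum_insert ha]
    exact (hf a (by simp)).add (ih fun i hi => hf i (by simp [hi]))

lemma _root_.ExtAt.sub {f g : ℂ → ℂ} {c : ℂ} (hf : ExtAt f c) (hg : ExtAt g c) :
    ExtAt (fun z => f z - g z) c := by
  simpa [sub_eq_add_neg] using hf.add ((ExtAt.const (-1)).mul hg)

/-- Riemann removable singularity: the value at `c` can be corrected without changing `f` elsewhere. -/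
lemma _root_.ExtAt.glue {U : Set ℂ} {c : ℂ} {f : ℂ → ℂ} (hf : ∀ z ∈ U, z ≠ c → DifferentiableAt ℂ f z)
    (he : ExtAt f c) : ∃ F : ℂ → ℂ, DifferentiableOn ℂ F U ∧ ∀ z, z ≠ c → F z = f z := by
  obtain ⟨g, hg, hg2⟩ := he
  refine ⟨Function.update f c (g c), fun z hz => DifferentiableAt.differentiableWithinAt ?_,
    fun z hz => Function.update_of_ne hz _ _⟩
  by_cases hzc : z = c
  · subst hzc
    refine hg.differentiableAt.congr_of_eventuallyEq ?_
    rw [eventually_nhdsWithin_iff] at hg2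
    filter_upwards [hg2] with w hw
    by_cases h : w = z
    · subst h; simp
    · rw [Function.update_of_ne h]; exact (hw h).symm
  · refine (hf z hz hzc).congr_of_eventuallyEq ?_
    filter_upwards [isOpen_compl_singleton.mem_nhds hzc] with w hw
    exact Function.update_of_ne hw _ _

lemma _root_.ExtAt.circ_zero {U : Set ℂ} {c : ℂ} {ρ : ℝ} (hρ : 0 < ρ) (hU : IsOpen U)
    (hb : closedBall c ρ ⊆ U) {f : ℂ → ℂ} (hf : ∀ z ∈ U, z ≠ c → DifferentiableAt ℂ f z)
    (he : ExtAt f c) : (∮ z in C(c, ρ), f z) = 0 := by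
  obtain ⟨F, hF, hF2⟩ := he.glue hf
  rw [← cauchy_zero hρ.le hU hb hF]
  exact circleIntegral.integral_congr hρ.le fun z hz => (hF2 z (sphere_ne hz hρ)).symm

lemma eventually_notMem_range {n : ℕ} (cs : Fin n → ℂ) (x : ℂ) :
    ∀ᶠ z in nhdsWithin x {x}ᶜ, z ∉ range cs := by
  have h : (range cs \ {x})ᶜ ∈ nhds x :=
    ((finite_range cs).subset sdiff_subset).isClosed.isOpen_compl.mem_nhds (by simp)
  rw [eventually_nhdsWithin_iff]
  filter_upwards [h] with z hz hzx hr
  exact hz ⟨hr, hzx⟩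

lemma isOpen_compl_range {n : ℕ} (cs : Fin n → ℂ) : IsOpen (range cs)ᶜ :=
  (finite_range cs).isClosed.isOpen_compl

/-- Liouville: a function analytic off a finite set, with removable singularities there, and
vanishing at infinity, is zero. -/
lemma liouville_ext {n : ℕ} (cs : Fin n → ℂ) {f : ℂ → ℂ}
    (hf : DifferentiableOn ℂ f (range cs)ᶜ)
    (he : ∀ i, ExtAt f (cs i)) (h0 : Tendsto f (Bornology.cobounded ℂ) (nhds 0)) :
    ∀ z ∉ range cs, f z = 0 := by
  set F : ℂ → ℂ := fun z => limUnder (nhdsWithin z {z}ᶜ) f with hFdef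
  have hFf : ∀ z ∉ range cs, F z = f z := fun z hz => by
    have hc : ContinuousAt f z :=
      (hf.differentiableAt ((isOpen_compl_range cs).mem_nhds hz)).continuousAt
    exact (hc.tendsto.mono_left nhdsWithin_le_nhds).limUnder_eq
  have hFd : Differentiable ℂ F := by
    intro z
    by_cases hz : z ∈ range cs
    · obtain ⟨i, rfl⟩ := hz
      obtain ⟨g, hg, hg2⟩ := he i
      refine hg.differentiableAt.congr_of_eventuallyEq ?_
      have := hg2.and (eventually_notMem_range cs (cs i))
      rw [eventually_nhdsWithin_iff] at this
      filter_upwards [this] with w hw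
      by_cases h : w = cs i
      · subst h
        refine Tendsto.limUnder_eq ?_
        exact (hg.continuousAt.tendsto.mono_left nhdsWithin_le_nhds).congr' hg2
      · obtain ⟨h1, h2⟩ := hw h
        rw [hFf w h2, h1]
    · refine (hf.differentiableAt ((isOpen_compl_range cs).mem_nhds hz)).congr_of_eventuallyEq ?_
      filter_upwards [(isOpen_compl_range cs).mem_nhds hz] with w hw using hFf w hw
  have hF0 : Tendsto F (cocompact ℂ) (nhds 0) := by
    rw [← Metric.cobounded_eq_cocompact]
    refine h0.congr' ?_
    have : (range cs)ᶜ ∈ Bornology.cobounded ℂ :=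
      Bornology.isBounded_def.1 (finite_range cs).isBounded
    filter_upwards [this] with z hz using (hFf z hz).symm
  intro z hz
  rw [← hFf z hz]
  exact hFd.apply_eq_of_tendsto_cocompact z hF0

lemma dslope_analytic {H : ℂ → ℂ} {c : ℂ} (hH : AnalyticAt ℂ H c) :
    AnalyticAt ℂ (dslope H c) c := by
  have ho : {z | AnalyticAt ℂ H z} ∈ nhds c := (isOpen_analyticAt ℂ H).mem_nhds hH
  have h1 : DifferentiableOn ℂ H {z | AnalyticAt ℂ H z} := fun z hz =>
    hz.differentiableAt.differentiableWithinAt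
  exact ((differentiableOn_dslope ho).2 h1).analyticAt ho

/-- Taylor expansion at `c` of `H z / (z - ζ)`, with coefficients continuous in `ζ ≠ c`. -/
lemma div_expand {c : ℂ} (L : ℕ) : ∀ {H : ℂ → ℂ}, AnalyticAt ℂ H c →
    ∃ h : ℕ → ℂ → ℂ, (∀ m, ContinuousOn (h m) {c}ᶜ) ∧ ∀ ζ, ζ ≠ c → ∃ g : ℂ → ℂ, AnalyticAt ℂ g c ∧
      ∀ᶠ z in nhds c, H z / (z - ζ) =
        (∑ m ∈ Finset.range L, h m ζ * (z - c) ^ m) + (z - c) ^ L * g z := by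
  induction L with
  | zero =>
    intro H hH
    refine ⟨fun _ _ => 0, fun _ => continuousOn_const, fun ζ hζ =>
      ⟨fun z => H z / (z - ζ), ?_, by simp⟩⟩
    exact hH.div (analyticAt_id.sub analyticAt_const) (sub_ne_zero.2 hζ.symm)
  | succ L ih =>
    intro H hH
    obtain ⟨h1, h1c, h1e⟩ := ih (dslope_analytic hH)
    obtain ⟨h2, h2c, h2e⟩ := ih (H := fun _ => H c) analyticAt_const
    have hinv : ContinuousOn (fun ζ : ℂ => (c - ζ)⁻¹) {c}ᶜ :=
      ContinuousOn.inv₀ (by fun_prop) fun z hz => sub_ne_zero.2 (fun h => hz h.symm)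
    refine ⟨fun m ζ => Nat.casesOn m (H c * (c - ζ)⁻¹) fun m => h1 m ζ - (c - ζ)⁻¹ * h2 m ζ,
      ?_, ?_⟩
    · rintro (_ | m)
      · exact continuousOn_const.mul hinv
      · exact (h1c m).sub (hinv.mul (h2c m))
    · intro ζ hζ
      obtain ⟨g1, g1a, g1e⟩ := h1e ζ hζ
      obtain ⟨g2, g2a, g2e⟩ := h2e ζ hζ
      refine ⟨fun z => g1 z - (c - ζ)⁻¹ * g2 z, g1a.sub (analyticAt_const.mul g2a), ?_⟩
      filter_upwards [g1e, g2e, isOpen_compl_singleton.mem_nhds hζ.symm] with z e1 e2 hz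
      have hz' : z - ζ ≠ 0 := sub_ne_zero.2 hz
      have hcz : c - ζ ≠ 0 := sub_ne_zero.2 hζ.symm
      have h3 : H z = H c + (z - c) * dslope H c z := by
        have := sub_smul_dslope H c z
        rw [smul_eq_mul] at this
        rw [this]; ring
      have h4 : H z / (z - ζ) = H c * (c - ζ)⁻¹ + (z - c) * (dslope H c z / (z - ζ)
          - (c - ζ)⁻¹ * (H c / (z - ζ))) := by
        rw [h3]
        field_simp
        ring
      rw [h4, e1, e2, Finset.sum_range_succ']
      have s1 : ∑ m ∈ Finset.range L, (h1 m ζ - (c - ζ)⁻¹ * h2 m ζ) * (z - c) ^ (m + 1) =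
          (z - c) * (∑ m ∈ Finset.range L, h1 m ζ * (z - c) ^ m -
            (c - ζ)⁻¹ * ∑ m ∈ Finset.range L, h2 m ζ * (z - c) ^ m) := by
        rw [Finset.mul_sum, ← Finset.sum_sub_distrib, Finset.mul_sum]
        exact Finset.sum_congr rfl fun m _ => by ring
      change _ = (∑ m ∈ Finset.range L, (h1 m ζ - (c - ζ)⁻¹ * h2 m ζ) * (z - c) ^ (m + 1)) +
        (H c * (c - ζ)⁻¹) * (z - c) ^ 0 + (z - c) ^ (L + 1) * (g1 z - (c - ζ)⁻¹ * g2 z)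
      rw [s1]
      ring

/-- Regularity at `c` of one term of the divided difference, once its polar part is removed: the
Taylor coefficients of `H z / (z - ζ)` of order less than `L` are the coefficients along the polar
functions `v l`. In the application `H` is an entry of `R Γ D` and `γ` an entry of `Γ⁻¹`. -/
lemma local_ext {c : ℂ} {L K : ℕ} (hLK : L * K = 0) {γ : ℂ → ℂ} (hγ : AnalyticAt ℂ γ c)
    {H : ℂ → ℂ} {ζ : ℂ} {h : ℕ → ℂ} {g : ℂ → ℂ} (hg : AnalyticAt ℂ g c)
    (e : ∀ᶠ z in nhds c, H z / (z - ζ) =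
        (∑ m ∈ Finset.range L, h m * (z - c) ^ m) + (z - c) ^ L * g z)
    (v : Fin L → ℂ → ℂ)
    (hv : ∀ l, ExtAt (fun z => γ z * ((z - c) ^ (l.1 + 1))⁻¹ + v l z) c) :
    ExtAt (fun z => H z / (z - ζ) * (z - c) ^ ((K : ℤ) - (L : ℤ)) * γ z
      + ∑ l : Fin L, h (L - (l.1 + 1)) * v l z) c := by
  have h1 : ExtAt (fun z => g z * (z - c) ^ K * γ z) c :=
    .of_analytic ((hg.mul ((analyticAt_id.sub analyticAt_const).pow K)).mul hγ)
  have h2 := h1.add (ExtAt.sum Finset.univ fun (l : Fin L) _ =>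
    (ExtAt.const (h (L - (l.1 + 1)))).mul (hv l))
  refine h2.congr ?_
  filter_upwards [nhdsWithin_le_nhds e, self_mem_nhdsWithin] with z hz hzc
  have hzc : z - c ≠ 0 := sub_ne_zero.2 hzc
  have hp : (z - c) ^ ((K : ℤ) - (L : ℤ)) = (z - c) ^ K * ((z - c) ^ L)⁻¹ := by
    rw [zpow_sub₀ hzc, zpow_natCast, zpow_natCast]; rfl
  rw [hz, hp]
  simp only [mul_add, Finset.sum_add_distrib, add_mul]
  have h3 : (∑ m ∈ Finset.range L, h m * (z - c) ^ m) * ((z - c) ^ K * ((z - c) ^ L)⁻¹) * γ z =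
      ∑ l : Fin L, h (L - (l.1 + 1)) * (γ z * ((z - c) ^ (l.1 + 1))⁻¹) := by
    rw [Finset.sum_mul, Finset.sum_mul, ← Finset.sum_range_reflect, ← Fin.sum_univ_eq_sum_range
      (fun j => h (L - 1 - j) * (z - c) ^ (L - 1 - j) * ((z - c) ^ K * ((z - c) ^ L)⁻¹) * γ z)]
    refine Finset.sum_congr rfl fun l _ => ?_
    have hl := l.2
    have hK : K = 0 := by
      rcases Nat.mul_eq_zero.1 hLK with h | h
      · omega
      · exact h
    have e1 : L - (l.1 + 1) = L - 1 - l.1 := by omega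
    have e2 : (z - c) ^ L = (z - c) ^ (L - 1 - l.1) * (z - c) ^ (l.1 + 1) := by
      rw [← pow_add]; congr 1; omega
    rw [hK, e1, e2]
    field_simp
  rw [h3]
  have : (z - c) ^ L * g z * ((z - c) ^ K * ((z - c) ^ L)⁻¹) * γ z = g z * (z - c) ^ K * γ z := by
    field_simp
  rw [this]
  ring

end VarDet

/-! ### Expansion of the divided difference of the dressing -/

namespace VarDet

open Metric Set Complex MeasureTheory

/-- The divided difference of `R` expands along the polar rows `v q`. Only three properties of the
rows are used: analyticity off `cs q.1`, decay at infinity, and the polar part at `cs q.1`. -/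
lemma expansion {N n : ℕ} {cs : Fin n → ℂ} (hcs : Function.Injective cs)
    {Ld Kd : Fin n → Fin N → ℕ} (hLK : ∀ i μ, Ld i μ * Kd i μ = 0)
    {O : Set ℂ} (hO : IsOpen O) (hcO : ∀ i, cs i ∈ O) {Γ Γinv : ℂ → Mat N}
    (hΓinv : ∀ a b, DifferentiableOn ℂ (fun z => Γinv z a b) O)
    (hmul : ∀ z ∈ O, Γ z * Γinv z = 1)
    {R : ℂ → Mat N} (hR : ∀ a b, DifferentiableOn ℂ (fun z => R z a b) (range cs)ᶜ)
    (hRone : Tendsto R (Bornology.cobounded ℂ) (nhds 1))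
    (hRext : ∀ i a b, ExtAt (fun z => (R z * Γ z *
        Matrix.diagonal fun μ => (z - cs i) ^ ((Ld i μ : ℤ) - (Kd i μ : ℤ))) a b) (cs i))
    {v : (Σ i : Fin n, Σ μ : Fin N, Fin (Ld i μ)) → ℂ → Fin N → ℂ}
    (hv1 : ∀ q b z, z ≠ cs q.1 → DifferentiableAt ℂ (fun z => v q z b) z)
    (hv2 : ∀ q b, Tendsto (fun z => v q z b) (Bornology.cobounded ℂ) (nhds 0))
    (hv3 : ∀ q b, ExtAt (fun z => Γinv z q.2.1 b * ((z - cs q.1) ^ (q.2.2.1 + 1))⁻¹ + v q z b)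
      (cs q.1)) :
    ∃ κ : Fin N → (Σ i : Fin n, Σ μ : Fin N, Fin (Ld i μ)) → ℂ → ℂ,
      (∀ a q, ContinuousOn (κ a q) (range cs)ᶜ) ∧
      ∀ ζ ∉ range cs, ∀ z ∉ range cs, ∀ a b,
        dslope (fun w => R w a b) ζ z = ∑ q, κ a q ζ * v q z b := by
  choose H hHa hHe using hRext
  choose h hhc hhe using fun i a μ => div_expand (Ld i μ) (hHa i a μ)
  refine ⟨fun a q ζ => -h q.1 a q.2.1 (Ld q.1 q.2.1 - (q.2.2.1 + 1)) ζ, fun a q =>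
    ((hhc q.1 a q.2.1 _).mono ?_).neg, ?_⟩
  · exact compl_subset_compl.2 (by rintro _ rfl; exact mem_range_self _)
  intro ζ hζ z hz a b
  have hmem : (range cs)ᶜ ∈ nhds ζ := (isOpen_compl_range cs).mem_nhds hζ
  rw [← sub_eq_zero]
  revert z
  refine liouville_ext cs
    (f := fun z => dslope (fun w => R w a b) ζ z -
      ∑ q : (Σ i : Fin n, Σ μ : Fin N, Fin (Ld i μ)),
        -h q.1 a q.2.1 (Ld q.1 q.2.1 - (q.2.2.1 + 1)) ζ * v q z b) ?_ ?_ ?_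
  · refine ((differentiableOn_dslope hmem).2 (hR a b)).sub ?_
    refine DifferentiableOn.fun_sum fun q _ => ?_
    refine (differentiableOn_const _).mul fun z hz => ?_
    exact (hv1 q b z fun hh => hz (hh ▸ mem_range_self _)).differentiableWithinAt
  · intro i
    have hζi : ζ ≠ cs i := fun hh => hζ (hh ▸ mem_range_self _)
    have hγ : ∀ μ, AnalyticAt ℂ (fun z => Γinv z μ b) (cs i) := fun μ =>
      (hΓinv μ b).analyticAt (hO.mem_nhds (hcO i))
    -- the polar part at `cs i`, row index by row index
    have h1 := ExtAt.sum Finset.univ fun (μ : Fin N) _ => by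
      obtain ⟨g, hg, e⟩ := hhe i a μ ζ hζi
      exact local_ext (hLK i μ) (hγ μ) hg e (fun l z => v ⟨i, μ, l⟩ z b)
        (fun l => hv3 ⟨i, μ, l⟩ b)
    have h2 : ExtAt (fun z => R ζ a b / (z - ζ)) (cs i) := .of_analytic
      (analyticAt_const.div (analyticAt_id.sub analyticAt_const) (sub_ne_zero.2 hζi.symm))
    have h3 := ExtAt.sum (c := cs i) (Finset.univ.erase i) (f := fun j z => ∑ μ, ∑ l : Fin (Ld j μ),
      -h j a μ (Ld j μ - (l.1 + 1)) ζ * v ⟨j, μ, l⟩ z b) fun j hj => by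
        refine ExtAt.sum _ fun μ _ => ExtAt.sum _ fun l _ => (ExtAt.const _).mul (.of_analytic ?_)
        have hji : cs i ≠ cs j := fun hh => (Finset.ne_of_mem_erase hj) (hcs hh).symm
        have : DifferentiableOn ℂ (fun z => v ⟨j, μ, l⟩ z b) {cs j}ᶜ := fun z hz =>
          (hv1 ⟨j, μ, l⟩ b z hz).differentiableWithinAt
        exact this.analyticAt (isOpen_compl_singleton.mem_nhds hji)
    refine ((h1.sub h2).sub h3).congr ?_
    have hHe' : ∀ᶠ z in nhdsWithin (cs i) {cs i}ᶜ, ∀ μ, H i a μ z = (R z * Γ z *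
        Matrix.diagonal fun μ => (z - cs i) ^ ((Ld i μ : ℤ) - (Kd i μ : ℤ))) a μ :=
      eventually_all.2 fun μ => hHe i a μ
    filter_upwards [hHe', self_mem_nhdsWithin,
      nhdsWithin_le_nhds (isOpen_compl_singleton.mem_nhds hζi.symm),
      nhdsWithin_le_nhds (hO.mem_nhds (hcO i))] with z e1 hzc hzζ hzO
    have hzc : z - cs i ≠ 0 := sub_ne_zero.2 hzc
    have hds : dslope (fun w => R w a b) ζ z = (R z a b - R ζ a b) / (z - ζ) := by
      rw [dslope_of_ne _ hzζ, slope_def_field]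
    have hRab : R z a b = ∑ μ, H i a μ z * (z - cs i) ^ ((Kd i μ : ℤ) - (Ld i μ : ℤ)) *
        Γinv z μ b := by
      have : R z = (R z * Γ z) * Γinv z := by rw [mul_assoc, hmul z hzO, mul_one]
      rw [this, Matrix.mul_apply]
      refine Finset.sum_congr rfl fun μ _ => ?_
      rw [e1 μ, Matrix.mul_diagonal, mul_assoc _ (_ ^ _) (_ ^ _), ← zpow_add₀ hzc]
      simp
    rw [hds, Fintype.sum_sigma, ← Finset.add_sum_erase _ _ (Finset.mem_univ i)]
    simp only [Fintype.sum_sigma, Finset.sum_add_distrib, neg_mul, Finset.sum_neg_distrib]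
    rw [hRab, sub_div, Finset.sum_div]
    have : ∀ μ, H i a μ z / (z - ζ) * (z - cs i) ^ ((Kd i μ : ℤ) - (Ld i μ : ℤ)) * Γinv z μ b =
      H i a μ z * (z - cs i) ^ ((Kd i μ : ℤ) - (Ld i μ : ℤ)) * Γinv z μ b / (z - ζ) := by
      intro μ; ring
    rw [Finset.sum_congr rfl fun μ _ => this μ]
    ring
  · rw [← sub_zero (0 : ℂ)]
    refine Tendsto.sub ?_ ?_
    · have hinv : Tendsto (fun z : ℂ => (z - ζ)⁻¹) (Bornology.cobounded ℂ) (nhds 0) := by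
        have := (tendsto_inv₀_cobounded (α := ℂ)).comp (tendsto_sub_const_cobounded ζ)
        exact this
      have hRab : Tendsto (fun z => R z a b) (Bornology.cobounded ℂ) (nhds ((1 : Mat N) a b)) :=
        ((continuous_apply_apply a b).tendsto _).comp hRone
      have := (hRab.sub_const (R ζ a b)).mul hinv
      rw [mul_zero] at this
      refine this.congr' ?_
      have hne : ({ζ} : Set ℂ)ᶜ ∈ Bornology.cobounded ℂ :=
        Bornology.isBounded_def.1 Bornology.isBounded_singleton
      filter_upwards [hne] with z hzζ
      rw [dslope_of_ne _ hzζ, slope_def_field]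
      rfl
    · have := tendsto_finsetSum (Finset.univ) fun
        (q : (Σ i : Fin n, Σ μ : Fin N, Fin (Ld i μ))) _ =>
          (hv2 q b).const_mul (-h q.1 a q.2.1 (Ld q.1 q.2.1 - (q.2.2.1 + 1)) ζ)
      simpa using this

end VarDet

/-! ### Cauchy integrals over several circles; the polar rows -/

namespace VarDet

open Metric Set Complex MeasureTheory

/-- The polar row attached to the pole `cs q.1`, the row index `q.2.1` and the order `q.2.2 + 1`,
for a general matrix function `A`; with `A = Γ⁻¹` it is `v_q`, with `A = ∂ₜΓ⁻¹` it is `∂ₜv_q`. -/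
def vv {N n : ℕ} {Ld : Fin n → Fin N → ℕ} (cs : Fin n → ℂ) (σ : Fin n → ℝ) (A : ℂ → Mat N)
    (q : Σ i : Fin n, Σ μ : Fin N, Fin (Ld i μ)) (z : ℂ) (b : Fin N) : ℂ :=
  pp (cs q.1) (q.2.2.1 + 1) (tc (cs q.1) (σ q.1) (fun ξ => A ξ q.2.1 b)) z

lemma pp_tendsto (c : ℂ) (l : ℕ) (a : ℕ → ℂ) :
    Tendsto (pp c l a) (Bornology.cobounded ℂ) (nhds 0) := by
  have hinv : Tendsto (fun z : ℂ => (z - c)⁻¹) (Bornology.cobounded ℂ) (nhds 0) :=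
    (tendsto_inv₀_cobounded (α := ℂ)).comp (tendsto_sub_const_cobounded c)
  have h : ∀ j ∈ Finset.range l, Tendsto (fun z : ℂ => a j * ((z - c) ^ (l - j))⁻¹)
      (Bornology.cobounded ℂ) (nhds 0) := by
    intro j hj
    have h2 := (hinv.pow (l - j)).const_mul (a j)
    have h0 : l - j ≠ 0 := by have := Finset.mem_range.1 hj; omega
    simpa [inv_pow, zero_pow h0] using h2
  have := (tendsto_finsetSum _ h).neg
  simp only [Finset.sum_const_zero, neg_zero] at this
  exact this

section Geometry

variable {N n : ℕ} {cs : Fin n → ℂ} {ρ : Fin n → ℝ}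

lemma notMem_other (hdisj : ∀ i j, i ≠ j → ρ i + ρ j < dist (cs i) (cs j)) {i j : Fin n}
    (hij : i ≠ j) {z : ℂ} (hz : z ∈ closedBall (cs i) (ρ i)) : z ∉ closedBall (cs j) (ρ j) := by
  intro h
  have h1 := mem_closedBall'.1 hz
  have h2 := mem_closedBall.1 h
  have := dist_triangle (cs i) z (cs j)
  linarith [hdisj i j hij]

lemma sphere_notMem (hρ : ∀ i, 0 < ρ i) (hdisj : ∀ i j, i ≠ j → ρ i + ρ j < dist (cs i) (cs j))
    {i : Fin n} {z : ℂ} (hz : z ∈ sphere (cs i) (ρ i)) : z ∉ range cs := by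
  rintro ⟨j, rfl⟩
  by_cases hij : i = j
  · subst hij
    exact sphere_ne hz (hρ i) rfl
  · exact notMem_other hdisj hij (sphere_subset_closedBall hz) (mem_closedBall_self (hρ j).le)

lemma sphere_ne_ball (hdisj : ∀ i j, i ≠ j → ρ i + ρ j < dist (cs i) (cs j)) {i j : Fin n} {z : ℂ}
    (hz : z ∈ ball (cs j) (ρ j)) : z ∉ sphere (cs i) (ρ i) := by
  intro h
  by_cases hij : j = i
  · subst hij
    exact (mem_ball.1 hz).ne (mem_sphere.1 h)
  · exact notMem_other hdisj hij (ball_subset_closedBall hz) (sphere_subset_closedBall h)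

/-- Cauchy's formula over the union of the disjoint circles. -/
lemma cauchy_sum (hρ : ∀ i, 0 < ρ i) (hdisj : ∀ i j, i ≠ j → ρ i + ρ j < dist (cs i) (cs j))
    {O : Set ℂ} (hO : IsOpen O) (hDO : ∀ i, closedBall (cs i) (ρ i) ⊆ O) {f : ℂ → ℂ}
    (hf : DifferentiableOn ℂ f O) {j : Fin n} {z : ℂ} (hz : z ∈ ball (cs j) (ρ j)) :
    (∑ i, ∮ ζ in C(cs i, ρ i), f ζ / (ζ - z)) = 2 * (Real.pi : ℂ) * I * f z := by
  rw [Finset.sum_eq_single_of_mem j (Finset.mem_univ j)]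
  · exact cauchy_formula hO (hDO j) hf hz
  · intro i _ hij
    have hzi := notMem_other hdisj hij.symm (ball_subset_closedBall hz)
    have hU : IsOpen (O ∩ {z}ᶜ) := hO.inter isOpen_compl_singleton
    refine cauchy_zero (hρ i).le hU (fun w hw => ⟨hDO i hw, ?_⟩) ?_
    · rintro rfl
      exact hzi hw
    · refine (hf.mono inter_subset_left).div (by fun_prop) fun w hw => sub_ne_zero.2 hw.2

/-- A polar part at any of the centres has vanishing Cauchy integral inside the disks: from its own
disk by expansion at infinity, from another one because the contributions of the two circles
cancel. -/
lemma pp_cauchy_sum (hρ : ∀ i, 0 < ρ i) (hdisj : ∀ i j, i ≠ j → ρ i + ρ j < dist (cs i) (cs j))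
    {j : Fin n} {z : ℂ} (hz : z ∈ ball (cs j) (ρ j)) (hzc : z ∉ range cs) (k : Fin n) (l : ℕ)
    (a : ℕ → ℂ) : (∑ i, ∮ ζ in C(cs i, ρ i), pp (cs k) l a ζ / (ζ - z)) = 0 := by
  have hpd : DifferentiableOn ℂ (pp (cs k) l a) {cs k}ᶜ := fun w hw =>
    (pp_diff hw l a).differentiableWithinAt
  have hk : ∀ i, i ≠ k → closedBall (cs i) (ρ i) ⊆ {cs k}ᶜ := by
    rintro i hik w hw rfl
    exact notMem_other hdisj hik hw (mem_closedBall_self (hρ k).le)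
  have hzero : ∀ i, i ≠ k → i ≠ j → (∮ ζ in C(cs i, ρ i), pp (cs k) l a ζ / (ζ - z)) = 0 := by
    intro i hik hij
    have hzi := notMem_other hdisj hij.symm (ball_subset_closedBall hz)
    have hU : IsOpen (({cs k}ᶜ : Set ℂ) ∩ {z}ᶜ) := isOpen_compl_singleton.inter isOpen_compl_singleton
    refine cauchy_zero (hρ i).le hU (fun w hw => ⟨hk i hik hw, ?_⟩) ?_
    · rintro rfl
      exact hzi hw
    · exact (hpd.mono inter_subset_left).div (by fun_prop) fun w hw => sub_ne_zero.2 hw.2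
  by_cases hjk : j = k
  · subst hjk
    refine Finset.sum_eq_zero fun i _ => ?_
    by_cases hij : i = j
    · subst hij
      exact pp_circ_in hz (fun h => hzc (h ▸ mem_range_self _)) l a
    · exact hzero i hij hij
  · rw [Finset.sum_eq_add_of_mem j k (Finset.mem_univ j) (Finset.mem_univ k) hjk
      (fun i _ h => hzero i h.2 h.1)]
    rw [cauchy_formula isOpen_compl_singleton (hk j hjk) hpd hz, pp_circ_out (hρ k)
      (notMem_other hdisj hjk (ball_subset_closedBall hz))]
    ring

lemma transform_diff {c : ℂ} {s : ℝ} (hs : 0 ≤ s) {u : ℂ → ℂ} (hu : ContinuousOn u (sphere c s)) :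
    DifferentiableOn ℂ (fun z => ∮ ζ in C(c, s), u ζ / (ζ - z)) (sphere c s)ᶜ := by
  intro z hz
  refine (hasDerivAt_circ (𝕜 := ℂ) (f := fun ζ z => u ζ / (ζ - z))
    (f' := fun ζ z => u ζ / (ζ - z) ^ 2) hs isClosed_sphere.isOpen_compl ?_ ?_ ?_
    hz).differentiableAt.differentiableWithinAt
  · intro w hw
    exact hu.mul (contOn_invsub hw)
  · refine ContinuousOn.div (hu.comp continuousOn_fst fun p hp => hp.1) (by fun_prop) ?_
    rintro ⟨a, b⟩ ⟨ha, hb⟩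
    exact pow_ne_zero _ (sub_ne_zero.2 fun (h : a = b) => hb (show b ∈ sphere c s from h ▸ (show a ∈ sphere c s from ha)))
  · intro ζ hζ w hw
    have hne : ζ - w ≠ 0 := by
      refine sub_ne_zero.2 ?_
      rintro rfl
      exact hw hζ
    have := ((hasDerivAt_id w).const_sub ζ).inv hne |>.const_mul (u ζ)
    have e1 : u ζ / (ζ - w) ^ 2 = u ζ * (- -1 / (ζ - id w) ^ 2) := by simp [div_eq_mul_inv]
    have e2 : (fun s => u ζ / (ζ - s)) = fun y => u ζ * (fun x => ζ - id x)⁻¹ y := by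
      ext y; simp [div_eq_mul_inv]
    rw [e1, e2]
    exact this

end Geometry

section Rows

variable {N n : ℕ} {cs : Fin n → ℂ} {σ : Fin n → ℝ} {Ld : Fin n → Fin N → ℕ} {A : ℂ → Mat N}

lemma vv_diff (q : Σ i : Fin n, Σ μ : Fin N, Fin (Ld i μ)) (b : Fin N) {z : ℂ} (hz : z ≠ cs q.1) :
    DifferentiableAt ℂ (fun z => vv cs σ A q z b) z := pp_diff hz _ _

/-- The row `vv` cancels the principal part of `A (z - c) ^ (-ℓ)`. -/
lemma vv_ext {O : Set ℂ} (hσ : ∀ i, 0 < σ i) (hO : IsOpen O)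
    (hDO : ∀ i, closedBall (cs i) (σ i) ⊆ O)
    (hA : ∀ a b, DifferentiableOn ℂ (fun z => A z a b) O)
    (q : Σ i : Fin n, Σ μ : Fin N, Fin (Ld i μ)) (b : Fin N) :
    ExtAt (fun z => A z q.2.1 b * ((z - cs q.1) ^ (q.2.2.1 + 1))⁻¹ + vv cs σ A q z b) (cs q.1) := by
  obtain ⟨h, hh, e⟩ := taylor (hσ q.1) hO (hDO q.1) (hA q.2.1 b) (q.2.2.1 + 1)
  refine ⟨h, hh.analyticAt (hO.mem_nhds (hDO _ (mem_closedBall_self (hσ q.1).le))), ?_⟩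
  filter_upwards [self_mem_nhdsWithin] with z hz
  exact (pp_ext hz _ _ _ _ (e z)).symm

end Rows

end VarDet

/-! ### The identity behind the logarithmic derivative -/

namespace VarDet

open Metric Set Complex MeasureTheory

/-- The identity `∂ₜG = G M` at a fixed parameter, with the entries of `G` and `∂ₜG` written as
contour integrals, and the trace of the coefficient matrix `M`. Row `q` of the left-hand side is
`∂ₜ(v_q Γ)`, the row `vv cs σ dΓinv q` being `∂ₜv_q`. -/
lemma core {N n : ℕ} {cs : Fin n → ℂ} (hcs : Function.Injective cs) {ρ σ : Fin n → ℝ}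
    (hσ : ∀ i, 0 < σ i) (hσρ : ∀ i, σ i < ρ i)
    (hdisj : ∀ i j, i ≠ j → ρ i + ρ j < dist (cs i) (cs j))
    {Ld Kd : Fin n → Fin N → ℕ} (hLK : ∀ i μ, Ld i μ * Kd i μ = 0)
    {O : Set ℂ} (hO : IsOpen O) (hDO : ∀ i, closedBall (cs i) (ρ i) ⊆ O)
    {Γ Γinv dΓ dΓinv : ℂ → Mat N}
    (hΓ : ∀ a b, DifferentiableOn ℂ (fun z => Γ z a b) O)
    (hΓinv : ∀ a b, DifferentiableOn ℂ (fun z => Γinv z a b) O)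
    (hdΓ : ∀ a b, DifferentiableOn ℂ (fun z => dΓ z a b) O)
    (hdΓinv : ∀ z, dΓinv z = -(Γinv z * dΓ z * Γinv z))
    (hmul : ∀ z ∈ O, Γ z * Γinv z = 1) (hmul' : ∀ z ∈ O, Γinv z * Γ z = 1)
    {R Rinv R' : ℂ → Mat N} (hR : ∀ a b, DifferentiableOn ℂ (fun z => R z a b) (range cs)ᶜ)
    (hRinv : ∀ a b, ContinuousOn (fun z => Rinv z a b) (range cs)ᶜ)
    (hRmul : ∀ z ∉ range cs, Rinv z * R z = 1)
    (hRone : Tendsto R (Bornology.cobounded ℂ) (nhds 1))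
    (hRext : ∀ i a b, ExtAt (fun z => (R z * Γ z *
        Matrix.diagonal fun μ => (z - cs i) ^ ((Ld i μ : ℤ) - (Kd i μ : ℤ))) a b) (cs i))
    (hR' : ∀ z ∉ range cs, ∀ a b, HasDerivAt (fun w => R w a b) (R' z a b) z) :
    ∃ M : Matrix (Σ i : Fin n, Σ μ : Fin N, Fin (Ld i μ)) (Σ i : Fin n, Σ μ : Fin N, Fin (Ld i μ)) ℂ,
      M.trace = (2 * (Real.pi : ℂ) * I)⁻¹ * ∑ i, ∮ z in C(cs i, ρ i),
        Matrix.trace (Rinv z * R' z * dΓ z * Γinv z) ∧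
      ∀ (p : Σ i : Fin n, Σ ν : Fin N, Fin (Kd i ν)) (q : Σ i : Fin n, Σ μ : Fin N, Fin (Ld i μ)),
        (∮ z in C(cs p.1, ρ p.1), (Matrix.vecMul (vv cs σ Γinv q z) (dΓ z) +
          Matrix.vecMul (vv cs σ dΓinv q z) (Γ z)) p.2.1 *
            (z - cs p.1) ^ ((p.2.2.1 : ℤ) - (Kd p.1 p.2.1 : ℤ))) =
        ∑ q', M q' q * ∮ z in C(cs p.1, ρ p.1), (Matrix.vecMul (vv cs σ Γinv q' z) (Γ z)) p.2.1 *
            (z - cs p.1) ^ ((p.2.2.1 : ℤ) - (Kd p.1 p.2.1 : ℤ)) := by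
  have hρ : ∀ i, 0 < ρ i := fun i => (hσ i).trans (hσρ i)
  have hDOσ : ∀ i, closedBall (cs i) (σ i) ⊆ O := fun i =>
    (closedBall_subset_closedBall (hσρ i).le).trans (hDO i)
  have hcO : ∀ i, cs i ∈ O := fun i => hDO i (mem_closedBall_self (hρ i).le)
  have hsph : ∀ i, sphere (cs i) (ρ i) ⊆ (range cs)ᶜ := fun i z hz => sphere_notMem hρ hdisj hz
  have hsphO : ∀ i, sphere (cs i) (ρ i) ⊆ O := fun i => sphere_subset_closedBall.trans (hDO i)
  have hdI : ∀ a b, DifferentiableOn ℂ (fun z => dΓinv z a b) O := by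
    intro a b
    simp only [hdΓinv, Matrix.neg_apply, Matrix.mul_apply, Finset.sum_mul]
    exact (DifferentiableOn.fun_sum fun i _ => DifferentiableOn.fun_sum fun j _ =>
      ((hΓinv _ _).mul (hdΓ _ _)).mul (hΓinv _ _)).neg
  obtain ⟨κ, hκc, hκ⟩ := expansion hcs hLK hO hcO hΓinv hmul hR hRone hRext
    (v := vv cs σ Γinv) (fun q b z hz => vv_diff q b hz) (fun q b => pp_tendsto _ _ _)
    (vv_ext hσ hO hDOσ hΓinv)
  set v := vv (Ld := Ld) cs σ Γinv with hv
  set dv := vv (Ld := Ld) cs σ dΓinv with hdv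
  have hvd : ∀ q b z, z ∉ range cs → DifferentiableAt ℂ (fun z => v q z b) z := fun q b z hz =>
    vv_diff q b fun h => hz (h ▸ mem_range_self _)
  have hvc : ∀ q b i, ContinuousOn (fun z => v q z b) (sphere (cs i) (ρ i)) := fun q b i z hz =>
    (hvd q b z (hsph i hz)).continuousAt.continuousWithinAt
  have hdvd : ∀ q b z, z ∉ range cs → DifferentiableAt ℂ (fun z => dv q z b) z := fun q b z hz =>
    vv_diff q b fun h => hz (h ▸ mem_range_self _)
  have hdvc : ∀ q b i, ContinuousOn (fun z => dv q z b) (sphere (cs i) (ρ i)) := fun q b i z hz =>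
    (hdvd q b z (hsph i hz)).continuousAt.continuousWithinAt
  have hΨ : ∀ a b, DifferentiableOn ℂ (fun z => (dΓ z * Γinv z) a b) O := by
    intro a b
    simp only [Matrix.mul_apply]
    exact DifferentiableOn.fun_sum fun j _ => (hdΓ _ _).mul (hΓinv _ _)
  -- the rows `u q = v q Ψ R⁻¹`
  set Ψ : ℂ → Mat N := fun z => dΓ z * Γinv z with hΨdef
  set u : (Σ i : Fin n, Σ μ : Fin N, Fin (Ld i μ)) → ℂ → Fin N → ℂ := fun q z =>
    Matrix.vecMul (v q z) (Ψ z * Rinv z) with hu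
  have huc : ∀ q b i, ContinuousOn (fun z => u q z b) (sphere (cs i) (ρ i)) := by
    intro q b i
    simp only [hu, Matrix.vecMul, dotProduct, Matrix.mul_apply]
    refine continuousOn_finsetSum _ fun a _ => (hvc q a i).mul (continuousOn_finsetSum _ fun k _ =>
      ((hΨ a k).continuousOn.mono (hsphO i)).mul ((hRinv k b).mono (hsph i)))
  have huR : ∀ q, ∀ z ∉ range cs, Matrix.vecMul (u q z) (R z) = Matrix.vecMul (v q z) (Ψ z) := by
    intro q z hz
    simp only [hu]
    rw [Matrix.vecMul_vecMul, mul_assoc, hRmul z hz, mul_one]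
  have hκi : ∀ i a q' q, ContinuousOn (fun ζ => u q ζ a * κ a q' ζ) (sphere (cs i) (ρ i)) :=
    fun i a q' q => (huc q a i).mul ((hκc a q').mono (hsph i))
  set M : Matrix (Σ i : Fin n, Σ μ : Fin N, Fin (Ld i μ)) (Σ i : Fin n, Σ μ : Fin N, Fin (Ld i μ)) ℂ :=
    Matrix.of fun q' q => (2 * (Real.pi : ℂ) * I)⁻¹ * ∑ i, ∮ ζ in C(cs i, ρ i),
      ∑ b, u q ζ b * κ b q' ζ with hM
  refine ⟨M, ?_, ?_⟩
  · -- the trace: the divided difference on the diagonal is the derivative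
    simp only [Matrix.trace, Matrix.diag, hM, Matrix.of_apply]
    rw [← Finset.mul_sum, Finset.sum_comm]
    congr 1
    refine Finset.sum_congr rfl fun i _ => ?_
    rw [← circleIntegral.integral_fun_sum]
    · refine circleIntegral.integral_congr (hρ i).le fun z hz => ?_
      have hz' := hsph i hz
      have e1 : ∀ a b, R' z a b = ∑ q, κ a q z * v q z b := by
        intro a b
        rw [← hκ z hz' z hz' a b, dslope_same, (hR' z hz' a b).deriv]
      have e2 : ∑ a, (Rinv z * R' z * dΓ z * Γinv z) a a = ∑ a, (R' z * (Ψ z * Rinv z)) a a := by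
        have := Matrix.trace_mul_comm (Rinv z) (R' z * dΓ z * Γinv z)
        simp only [Matrix.trace, Matrix.diag, ← mul_assoc] at this
        rw [this]
        simp only [hΨdef, mul_assoc]
      rw [e2]
      simp only [hu, Matrix.vecMul, dotProduct]
      simp only [Matrix.mul_apply (M := R' z), e1, Finset.sum_mul]
      rw [Finset.sum_comm]
      refine Finset.sum_congr rfl fun a _ => ?_
      rw [Finset.sum_comm]
      refine Finset.sum_congr rfl fun b _ => Finset.sum_congr rfl fun q _ => ?_
      ring
    · exact fun q _ => (continuousOn_finsetSum _ fun b _ => hκi i b q q).circleIntegrable (hρ i).le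
  · intro p q
    -- the row `f = v Ψ + dv` has no pole: the polar parts cancel since `∂ₜΓ⁻¹ = -Γ⁻¹ Ψ`
    have hfext : ∀ β, ExtAt (fun z => Matrix.vecMul (v q z) (Ψ z) β + dv q z β) (cs q.1) := by
      intro β
      have hv3 := vv_ext hσ hO hDOσ hΓinv q
      have hdv3 := vv_ext hσ hO hDOσ hdI q
      have := (hdv3 β).add (ExtAt.sum Finset.univ fun a _ => (hv3 a).mul
        (.of_analytic ((hΨ a β).analyticAt (hO.mem_nhds (hcO q.1)))))
      refine this.congr (Eventually.of_forall fun z => ?_)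
      have e1 : dΓinv z q.2.1 β * ((z - cs q.1) ^ (q.2.2.1 + 1))⁻¹ =
          -∑ a, Γinv z q.2.1 a * ((z - cs q.1) ^ (q.2.2.1 + 1))⁻¹ * (dΓ z * Γinv z) a β := by
        rw [hdΓinv, Matrix.neg_apply, mul_assoc, Matrix.mul_apply, neg_mul, Finset.sum_mul]
        exact congrArg _ (Finset.sum_congr rfl fun a _ => by ring)
      simp only [e1, Matrix.vecMul, dotProduct, add_mul, Finset.sum_add_distrib, hv, hdv, hΨdef]
      ring
    have hfd : ∀ β, ∀ z ∈ O, z ≠ cs q.1 →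
        DifferentiableAt ℂ (fun z => Matrix.vecMul (v q z) (Ψ z) β + dv q z β) z := by
      intro β z hzO hz
      refine DifferentiableAt.add ?_ (vv_diff q β hz)
      simp only [Matrix.vecMul, dotProduct]
      exact DifferentiableAt.fun_sum fun a _ => (vv_diff q a hz).mul
        ((hΨ a β).differentiableAt (hO.mem_nhds hzO))
    have hvΨc : ∀ β i, ContinuousOn (fun z => Matrix.vecMul (v q z) (Ψ z) β)
        (sphere (cs i) (ρ i)) := by
      intro β i
      simp only [Matrix.vecMul, dotProduct]
      exact continuousOn_finsetSum _ fun a _ => (hvc q a i).mul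
        ((hΨ a β).continuousOn.mono (hsphO i))
    -- Cauchy's formula for `f`; its polar part `dv` contributes zero inside the disks
    have hfsum : ∀ β j, ∀ z ∈ ball (cs j) (ρ j), z ∉ range cs →
        (∑ i, ∮ ζ in C(cs i, ρ i), Matrix.vecMul (v q ζ) (Ψ ζ) β / (ζ - z)) =
          2 * (Real.pi : ℂ) * I * (Matrix.vecMul (v q z) (Ψ z) β + dv q z β) := by
      intro β j z hz hzc
      obtain ⟨F, hF, hFe⟩ := (hfext β).glue (hfd β)
      have h1 := cauchy_sum hρ hdisj hO hDO hF hz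
      have h2 := pp_cauchy_sum hρ hdisj hz hzc q.1 (q.2.2.1 + 1)
        (tc (cs q.1) (σ q.1) (fun ξ => dΓinv ξ q.2.1 β))
      rw [hFe z fun h => hzc (h ▸ mem_range_self _)] at h1
      rw [← h1, ← sub_zero (∑ i, ∮ ζ in C(cs i, ρ i), F ζ / (ζ - z)), ← h2, ← Finset.sum_sub_distrib]
      refine Finset.sum_congr rfl fun i _ => ?_
      have hzi : z ∉ sphere (cs i) (ρ i) := sphere_ne_ball hdisj hz
      rw [← circleIntegral.integral_sub]
      · refine circleIntegral.integral_congr (hρ i).le fun ζ hζ => ?_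
        change _ = F ζ / (ζ - z) - dv q ζ β / (ζ - z)
        rw [hFe ζ fun h => hsph i hζ (h ▸ mem_range_self _)]
        ring
      · exact ((hF.continuousOn.mono (hsphO i)).mul (contOn_invsub hzi)).circleIntegrable (hρ i).le
      · exact ((hdvc q β i).mul (contOn_invsub hzi)).circleIntegrable (hρ i).le
    -- `∑ M_{q'q} v_{q'}` differs from `f` by `C[u] R`, where `C[u]` is the Cauchy integral of `u`,
    -- up to sign: insert the expansion of the divided difference in the definition of `M`
    have hTv : ∀ β j, ∀ z ∈ ball (cs j) (ρ j), z ∉ range cs →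
        (∑ q', M q' q * v q' z β) - (Matrix.vecMul (v q z) (Ψ z) β + dv q z β) =
        ∑ b, (-((2 * (Real.pi : ℂ) * I)⁻¹ * ∑ i, ∮ ζ in C(cs i, ρ i), u q ζ b / (ζ - z))) * R z b β := by
      intro β j z hz hzc
      have h0 : Matrix.vecMul (v q z) (Ψ z) β + dv q z β = (2 * (Real.pi : ℂ) * I)⁻¹ *
          ∑ i, ∮ ζ in C(cs i, ρ i), Matrix.vecMul (v q ζ) (Ψ ζ) β / (ζ - z) := by
        rw [hfsum β j z hz hzc, inv_mul_cancel_left₀ tpi_ne]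
      have h1 : ∀ i, (∑ q', (∮ ζ in C(cs i, ρ i), ∑ b, u q ζ b * κ b q' ζ) * v q' z β) =
          (∮ ζ in C(cs i, ρ i), Matrix.vecMul (v q ζ) (Ψ ζ) β / (ζ - z)) -
            ∑ b, (∮ ζ in C(cs i, ρ i), u q ζ b / (ζ - z)) * R z b β := by
        intro i
        have hzi : z ∉ sphere (cs i) (ρ i) := sphere_ne_ball hdisj hz
        simp only [mul_comm _ (v _ z β), mul_comm _ (R z _ β)]
        simp only [← circleIntegral.integral_const_mul]
        rw [← circleIntegral.integral_fun_sum, ← circleIntegral.integral_fun_sum,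
          ← circleIntegral.integral_sub]
        · refine circleIntegral.integral_congr (hρ i).le fun ζ hζ => ?_
          have hζc := hsph i hζ
          have hne : z ≠ ζ := fun h => hzi (h ▸ hζ)
          have hne' : ζ - z ≠ 0 := sub_ne_zero.2 hne.symm
          have e1 : ∑ q', v q' z β * ∑ b, u q ζ b * κ b q' ζ =
              ∑ b, u q ζ b * dslope (fun w => R w b β) ζ z := by
            simp only [hκ ζ hζc z hzc, Finset.mul_sum]
            rw [Finset.sum_comm]
            exact Finset.sum_congr rfl fun b _ => Finset.sum_congr rfl fun q' _ => by ring
          have e2 : ∀ b, dslope (fun w => R w b β) ζ z = (R ζ b β - R z b β) / (ζ - z) := by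
            intro b
            rw [dslope_of_ne _ hne, slope_comm, slope_def_field]
          change ∑ q', v q' z β * ∑ b, u q ζ b * κ b q' ζ = _
          rw [e1, ← huR q ζ hζc]
          simp only [e2, Matrix.vecMul, dotProduct, Finset.sum_div]
          rw [← Finset.sum_sub_distrib]
          exact Finset.sum_congr rfl fun b _ => by ring
        · exact ((hvΨc β i).mul (contOn_invsub hzi)).circleIntegrable (hρ i).le
        · exact (continuousOn_finsetSum _ fun b _ => continuousOn_const.mul
            ((huc q b i).mul (contOn_invsub hzi))).circleIntegrable (hρ i).le
        · exact fun b _ => (continuousOn_const.mul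
            ((huc q b i).mul (contOn_invsub hzi))).circleIntegrable (hρ i).le
        · exact fun q' _ => (continuousOn_const.mul
            (continuousOn_finsetSum _ fun b _ => hκi i b q' q)).circleIntegrable (hρ i).le
      have h2 : ∑ q', M q' q * v q' z β = (2 * (Real.pi : ℂ) * I)⁻¹ *
          ∑ i, ∑ q', (∮ ζ in C(cs i, ρ i), ∑ b, u q ζ b * κ b q' ζ) * v q' z β := by
        rw [Finset.sum_comm, Finset.mul_sum]
        refine Finset.sum_congr rfl fun q' _ => ?_
        rw [hM, Matrix.of_apply, mul_assoc, Finset.sum_mul]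
      rw [h2, h0]
      simp only [h1, Finset.sum_sub_distrib]
      rw [Finset.sum_comm (s := (Finset.univ : Finset (Fin n)))]
      simp only [← Finset.sum_mul, neg_mul, Finset.sum_neg_distrib, mul_assoc, ← Finset.mul_sum]
      ring
    -- the integrand `E` of the difference of the two sides is regular at the pole: it is `C[u] R Γ D`
    -- up to sign and a nonnegative power of `z - cs j`, as `L = 0` where `K > 0`
    set j := p.1 with hj
    set ν := p.2.1 with hν
    have hKpos : 0 < Kd j ν := p.2.2.pos
    have hL0 : Ld j ν = 0 := by
      rcases Nat.mul_eq_zero.1 (hLK j ν) with h | h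
      · exact h
      · omega
    set m : ℤ := (p.2.2.1 : ℤ) - (Kd j ν : ℤ) with hm
    set E : ℂ → ℂ := fun z => ∑ q', M q' q * (Matrix.vecMul (v q' z) (Γ z) ν * (z - cs j) ^ m) -
      (Matrix.vecMul (v q z) (dΓ z) + Matrix.vecMul (dv q z) (Γ z)) ν * (z - cs j) ^ m with hE
    have hEext : ExtAt E (cs j) := by
      have hA : ∀ b, AnalyticAt ℂ (fun z => -((2 * (Real.pi : ℂ) * I)⁻¹ *
          ∑ i, ∮ ζ in C(cs i, ρ i), u q ζ b / (ζ - z))) (cs j) := by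
        intro b
        have : DifferentiableOn ℂ (fun z => -((2 * (Real.pi : ℂ) * I)⁻¹ *
          ∑ i, ∮ ζ in C(cs i, ρ i), u q ζ b / (ζ - z))) (ball (cs j) (ρ j)) :=
          ((DifferentiableOn.fun_sum fun i _ => (transform_diff (hρ i).le (huc q b i)).mono
            fun z hz => sphere_ne_ball hdisj hz).const_mul _).neg
        exact this.analyticAt (isOpen_ball.mem_nhds (mem_ball_self (hρ j)))
      have h3 := ExtAt.sum Finset.univ fun (b : Fin N) _ => ((ExtAt.of_analytic (hA b)).mul
        (hRext j b ν)).mul (c := cs j) (g := fun z => (z - cs j) ^ p.2.2.1) (.of_analytic (by fun_prop))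
      refine h3.congr ?_
      filter_upwards [self_mem_nhdsWithin, eventually_notMem_range cs (cs j),
        nhdsWithin_le_nhds (isOpen_ball.mem_nhds (mem_ball_self (hρ j))),
        nhdsWithin_le_nhds (hO.mem_nhds (hcO j))] with z hz hzc hzb hzO
      have hz0 : z - cs j ≠ 0 := sub_ne_zero.2 hz
      have e1 : Matrix.vecMul (v q z) (dΓ z) ν =
          ∑ β, Matrix.vecMul (v q z) (Ψ z) β * Γ z β ν := by
        have : dΓ z = Ψ z * Γ z := by rw [hΨdef, mul_assoc, hmul' z hzO, mul_one]
        rw [this, ← Matrix.vecMul_vecMul]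
        rfl
      have e2 : ∀ q', Matrix.vecMul (v q' z) (Γ z) ν = ∑ β, v q' z β * Γ z β ν := fun _ => rfl
      have e3 : Matrix.vecMul (dv q z) (Γ z) ν = ∑ β, dv q z β * Γ z β ν := rfl
      have e4 : E z = (∑ β, ((∑ q', M q' q * v q' z β) -
          (Matrix.vecMul (v q z) (Ψ z) β + dv q z β)) * Γ z β ν) * (z - cs j) ^ m := by
        simp only [hE, Pi.add_apply, e1, e2, e3, sub_mul, add_mul, Finset.sum_sub_distrib,
          Finset.sum_add_distrib, Finset.sum_mul, Finset.mul_sum]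
        rw [Finset.sum_comm]
        simp only [mul_assoc]
      have e5 : (z - cs j) ^ m = (z - cs j) ^ ((Ld j ν : ℤ) - (Kd j ν : ℤ)) * (z - cs j) ^ p.2.2.1 := by
        rw [hL0, ← zpow_natCast, ← zpow_add₀ hz0, hm]
        congr 1
        push_cast
        ring
      rw [e4]
      rw [e5]
      simp only [hTv _ j z hzb hzc, Matrix.mul_diagonal]
      simp only [Matrix.mul_apply, Finset.sum_mul, Finset.mul_sum]
      rw [Finset.sum_comm]
      exact Finset.sum_congr rfl fun β _ => Finset.sum_congr rfl fun b _ => by ring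
    have hzpow : ∀ z, z ≠ cs j → DifferentiableAt ℂ (fun z => (z - cs j) ^ m) z := fun z hz =>
      DifferentiableAt.zpow (by fun_prop) (Or.inl (sub_ne_zero.2 hz))
    have hdi : ∀ q' z, z ∈ O → z ∉ range cs → DifferentiableAt ℂ (fun z =>
        Matrix.vecMul (v q' z) (Γ z) ν * (z - cs j) ^ m) z := by
      intro q' z hzO hz
      refine DifferentiableAt.mul ?_ (hzpow z fun h => hz (h ▸ mem_range_self _))
      simp only [Matrix.vecMul, dotProduct]
      exact DifferentiableAt.fun_sum fun a _ => (hvd q' a z hz).mul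
        ((hΓ a _).differentiableAt (hO.mem_nhds hzO))
    have hdi' : ∀ z, z ∈ O → z ∉ range cs → DifferentiableAt ℂ (fun z =>
        (Matrix.vecMul (v q z) (dΓ z) + Matrix.vecMul (dv q z) (Γ z)) ν * (z - cs j) ^ m) z := by
      intro z hzO hz
      refine DifferentiableAt.mul ?_ (hzpow z fun h => hz (h ▸ mem_range_self _))
      simp only [Matrix.vecMul, dotProduct, Pi.add_apply]
      exact (DifferentiableAt.fun_sum fun a _ => (hvd q a z hz).mul
        ((hdΓ a _).differentiableAt (hO.mem_nhds hzO))).add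
        (DifferentiableAt.fun_sum fun a _ => (hdvd q a z hz).mul
        ((hΓ a _).differentiableAt (hO.mem_nhds hzO)))
    have hci : ∀ q', CircleIntegrable (fun z => Matrix.vecMul (v q' z) (Γ z) ν * (z - cs j) ^ m)
        (cs j) (ρ j) := fun q' => ContinuousOn.circleIntegrable (hρ j).le fun z hz =>
      (hdi q' z (hsphO j hz) (hsph j hz)).continuousAt.continuousWithinAt
    have hci' : CircleIntegrable (fun z => (Matrix.vecMul (v q z) (dΓ z) +
        Matrix.vecMul (dv q z) (Γ z)) ν * (z - cs j) ^ m) (cs j) (ρ j) :=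
      ContinuousOn.circleIntegrable (hρ j).le fun z hz =>
        (hdi' z (hsphO j hz) (hsph j hz)).continuousAt.continuousWithinAt
    have hU : IsOpen (O ∩ (cs '' {j}ᶜ)ᶜ) := hO.inter
      ((toFinite _).image cs).isClosed.isOpen_compl
    have hE0 : (∮ z in C(cs j, ρ j), E z) = 0 := by
      refine ExtAt.circ_zero (hρ j) hU (fun z hz => ⟨hDO j hz, ?_⟩) ?_ hEext
      · rintro ⟨i, hi, rfl⟩
        exact notMem_other hdisj (Ne.symm hi) hz (mem_closedBall_self (hρ i).le)
      · rintro z ⟨hzO, hz⟩ hzj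
        have hzc : z ∉ range cs := by
          rintro ⟨i, rfl⟩
          exact hz ⟨i, fun h => hzj (h ▸ rfl), rfl⟩
        exact (DifferentiableAt.fun_sum fun q' _ => (hdi q' z hzO hzc).const_mul _).sub
          (hdi' z hzO hzc)
    rw [hE, circleIntegral.integral_sub, circleIntegral.integral_fun_sum] at hE0
    · simp only [circleIntegral.integral_const_mul] at hE0
      exact (sub_eq_zero.1 hE0).symm
    · exact fun q' _ => (hci q').const_fun_smul (a := M q' q)
    · exact CircleIntegrable.fun_sum _ fun q' _ => (hci q').const_fun_smul (a := M q' q)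
    · exact hci'

end VarDet

/-! ### The characteristic matrix as a contour integral -/

namespace VarDet

open Metric Set Complex MeasureTheory

section Formula

variable {N n : ℕ} {cs : Fin n → ℂ} {σ ρ : Fin n → ℝ}

lemma extOf_notMem (hσ : ∀ i, 0 < σ i) {z : ℂ} (hz : z ∈ ExtOf n cs σ) : z ∉ range cs := by
  rintro ⟨i, rfl⟩
  have := hz i
  rw [dist_self] at this
  exact absurd (hσ i) this.not_gt

lemma extOf_notMem_closedBall {z : ℂ} (hz : z ∈ ExtOf n cs σ) (i : Fin n) :
    z ∉ closedBall (cs i) (σ i) := fun h => absurd (hz i) (mem_closedBall.1 h).not_gt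

/-- Outside the disks, the Cauchy projection defining `v_q` is the explicit polar row `vv`. -/
lemma Cm_eq_vv {Ld : Fin n → Fin N → ℕ} (hσ : ∀ i, 0 < σ i)
    (hdisj : ∀ i j, i ≠ j → σ i + σ j < dist (cs i) (cs j))
    {O : Set ℂ} (hO : IsOpen O) (hDO : ∀ i, closedBall (cs i) (σ i) ⊆ O) {A : ℂ → Mat N}
    (hA : ∀ a b, DifferentiableOn ℂ (fun z => A z a b) O)
    (q : Σ i : Fin n, Σ μ : Fin N, Fin (Ld i μ)) {z : ℂ} (hz : z ∈ ExtOf n cs σ) :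
    Cm N n cs σ (fun ξ ν' => A ξ q.2.1 ν' * ((ξ - cs q.1) ^ (q.2.2.1 + 1))⁻¹) z = vv cs σ A q z := by
  ext b
  rw [Cm, Finset.sum_eq_single_of_mem q.1 (Finset.mem_univ _)]
  · rw [cm_pp (hσ _) hO (hDO _) (hA _ _) _ (extOf_notMem_closedBall hz _),
      inv_mul_cancel_left₀ tpi_ne]
    rfl
  · intro i _ hi
    have hU : IsOpen (O ∩ ({cs q.1}ᶜ ∩ {z}ᶜ)) :=
      hO.inter (isOpen_compl_singleton.inter isOpen_compl_singleton)
    rw [cauchy_zero (hσ i).le hU (fun w hw => ⟨hDO i hw, ?_, ?_⟩), mul_zero]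
    · refine (((hA _ _).mono inter_subset_left).mul ?_).div (by fun_prop) fun w hw =>
        sub_ne_zero.2 hw.2.2
      exact DifferentiableOn.inv (by fun_prop) fun w hw => pow_ne_zero _ (sub_ne_zero.2 hw.2.1)
    · rintro rfl
      exact notMem_other hdisj hi hw (mem_closedBall_self (hσ _).le)
    · rintro rfl
      exact extOf_notMem_closedBall hz i hw

lemma Cm_w {Kd : Fin n → Fin N → ℕ} (hσ : ∀ i, 0 < σ i)
    (hdisj : ∀ i j, i ≠ j → σ i + σ j < dist (cs i) (cs j))
    (p : Σ i : Fin n, Σ ν : Fin N, Fin (Kd i ν)) {z : ℂ} (hz : z ∈ ExtOf n cs σ) :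
    Cm N n cs σ (fun ζ ν' => (if ν' = p.2.1 then ((ζ - cs p.1) ^ (p.2.2.1 + 1))⁻¹ else 0)) z =
      fun b => if b = p.2.1 then -((z - cs p.1) ^ (p.2.2.1 + 1))⁻¹ else 0 := by
  ext b
  rw [Cm]
  by_cases hb : b = p.2.1
  · simp only [hb, if_true]
    rw [Finset.sum_eq_single_of_mem p.1 (Finset.mem_univ _)]
    · rw [circ_out (hσ _) (extOf_notMem_closedBall hz _), neg_mul, mul_neg,
        inv_mul_cancel_left₀ tpi_ne]
    · intro i _ hi
      have hU : IsOpen (({cs p.1}ᶜ : Set ℂ) ∩ {z}ᶜ) :=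
        isOpen_compl_singleton.inter isOpen_compl_singleton
      rw [cauchy_zero (hσ i).le hU (fun w hw => ⟨?_, ?_⟩), mul_zero]
      · refine DifferentiableOn.div ?_ (by fun_prop) fun w hw => sub_ne_zero.2 hw.2
        exact DifferentiableOn.inv (by fun_prop) fun w hw => pow_ne_zero _ (sub_ne_zero.2 hw.1)
      · rintro rfl
        exact notMem_other hdisj hi hw (mem_closedBall_self (hσ _).le)
      · rintro rfl
        exact extOf_notMem_closedBall hz i hw
  · have h0 : ∀ x, (∮ ζ in C(cs x, σ x), (0 : ℂ)) = 0 := fun x => by simp [circleIntegral]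
    simp [hb, h0]

lemma Dloc_sphere (Nc : Fin n → Fin N → ℤ)
    (hdisj : ∀ i j, i ≠ j → ρ i + ρ j < dist (cs i) (cs j)) {i : Fin n} {z : ℂ}
    (hz : z ∈ sphere (cs i) (ρ i)) :
    Dloc N n cs ρ Nc z = Matrix.diagonal fun μ => (z - cs i) ^ Nc i μ := by
  rw [Dloc]
  congr 1
  ext μ
  rw [Finset.prod_eq_single_of_mem i (Finset.mem_univ i)]
  · rw [if_pos (sphere_subset_closedBall hz)]
  · intro j _ hj
    rw [if_neg (notMem_other hdisj hj.symm (sphere_subset_closedBall hz))]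

lemma isOpen_extOf : IsOpen (ExtOf n cs ρ) := by
  have : ExtOf n cs ρ = ⋂ i, {z | ρ i < dist z (cs i)} := by ext; simp [ExtOf]
  rw [this]
  exact isOpen_iInter_of_finite fun i => isOpen_lt continuous_const (by fun_prop)

lemma extOf_nonempty : (ExtOf n cs ρ).Nonempty := by
  have h : ∀ i, ∀ᶠ z in Bornology.cobounded ℂ, ρ i < dist z (cs i) := by
    intro i
    have : (closedBall (cs i) (ρ i))ᶜ ∈ Bornology.cobounded ℂ :=
      Bornology.isBounded_def.1 isBounded_closedBall
    filter_upwards [this] with z hz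
    simpa using hz
  exact (eventually_all.2 h).exists

/-- The coefficients of the expansion of `C₋[v_q S]` along the independent family `w` are contour
integrals around single points `cs p.1`. -/
lemma G_formula (hσ : ∀ i, 0 < σ i) (hσρ : ∀ i, σ i < ρ i)
    (hdisj : ∀ i j, i ≠ j → ρ i + ρ j < dist (cs i) (cs j))
    {Ld Kd : Fin n → Fin N → ℕ} (hLK : ∀ i μ, Ld i μ * Kd i μ = 0)
    {O : Set ℂ} (hO : IsOpen O) (hDO : ∀ i, closedBall (cs i) (ρ i) ⊆ O)
    {Γ Γinv : ℂ → Mat N}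
    (hΓ : ∀ a b, DifferentiableOn ℂ (fun z => Γ z a b) O)
    (hΓinv : ∀ a b, DifferentiableOn ℂ (fun z => Γinv z a b) O)
    (hmul' : ∀ z ∈ O, Γinv z * Γ z = 1)
    (hwindep :
      LinearIndependent ℂ (fun p : Σ i : Fin n, Σ ν : Fin N, Fin (Kd i ν) =>
        (ExtOf n cs σ).restrict (fun z =>
          Cm N n cs σ (fun ζ ν' => (if ν' = p.2.1 then ((ζ - cs p.1) ^ (p.2.2.1 + 1))⁻¹ else 0)) z)))
    (q : Σ i : Fin n, Σ μ : Fin N, Fin (Ld i μ)) (g : (Σ i : Fin n, Σ ν : Fin N, Fin (Kd i ν)) → ℂ)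
    (hG : Set.EqOn
        (fun z => Cm N n cs ρ (fun ζ => Matrix.vecMul
          (Cm N n cs σ (fun ξ ν' => (Γinv ξ) q.2.1 ν' * ((ξ - cs q.1) ^ (q.2.2.1 + 1))⁻¹) ζ)
          (Γ ζ * Dloc N n cs ρ (fun i μ => (Ld i μ : ℤ) - (Kd i μ : ℤ)) ζ)) z)
        (fun z => ∑ p : Σ i : Fin n, Σ ν : Fin N, Fin (Kd i ν),
          g p • Cm N n cs σ (fun ζ ν' =>
            (if ν' = p.2.1 then ((ζ - cs p.1) ^ (p.2.2.1 + 1))⁻¹ else 0)) z)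
        (ExtOf n cs ρ)) (p : Σ i : Fin n, Σ ν : Fin N, Fin (Kd i ν)) :
    g p = (2 * (Real.pi : ℂ) * I)⁻¹ * ∮ z in C(cs p.1, ρ p.1),
      (Matrix.vecMul (vv cs σ Γinv q z) (Γ z)) p.2.1 *
        (z - cs p.1) ^ ((p.2.2.1 : ℤ) - (Kd p.1 p.2.1 : ℤ)) := by
  have hρ : ∀ i, 0 < ρ i := fun i => (hσ i).trans (hσρ i)
  have hDOσ : ∀ i, closedBall (cs i) (σ i) ⊆ O := fun i =>
    (closedBall_subset_closedBall (hσρ i).le).trans (hDO i)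
  have hdisjσ : ∀ i j, i ≠ j → σ i + σ j < dist (cs i) (cs j) := fun i j h => by
    linarith [hdisj i j h, hσρ i, hσρ j]
  have hcO : ∀ i, cs i ∈ O := fun i => hDO i (mem_closedBall_self (hρ i).le)
  have hρσ : ExtOf n cs ρ ⊆ ExtOf n cs σ := fun z hz i => (hσρ i).trans (hz i)
  have hsphE : ∀ i, ∀ z ∈ sphere (cs i) (ρ i), z ∈ ExtOf n cs σ := by
    intro i z hz j
    by_cases hij : i = j
    · subst hij
      rw [mem_sphere.1 hz]
      exact hσρ i
    · have := notMem_other hdisj hij (sphere_subset_closedBall hz)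
      rw [mem_closedBall, not_le] at this
      exact (hσρ j).trans this
  have hU : ∀ i, IsOpen (O ∩ (cs '' {i}ᶜ)ᶜ) := fun i =>
    hO.inter ((toFinite _).image cs).isClosed.isOpen_compl
  have hDU : ∀ i, closedBall (cs i) (ρ i) ⊆ O ∩ (cs '' {i}ᶜ)ᶜ := by
    intro i z hz
    refine ⟨hDO i hz, ?_⟩
    rintro ⟨j, hj, rfl⟩
    exact notMem_other hdisj (Ne.symm hj) hz (mem_closedBall_self (hρ j).le)
  -- `(v_q Γ)_b (z - cs i) ^ L` extends across `cs i`
  have hF : ∀ i b, ∃ F : ℂ → ℂ, DifferentiableOn ℂ F (O ∩ (cs '' {i}ᶜ)ᶜ) ∧ ∀ z, z ≠ cs i →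
      F z = Matrix.vecMul (vv cs σ Γinv q z) (Γ z) b * (z - cs i) ^ Ld i b := by
    intro i b
    refine ExtAt.glue ?_ ?_
    · rintro z ⟨hzO, hz⟩ hzi
      have hzc : z ≠ cs q.1 := by
        intro h
        exact hz ⟨q.1, fun h' => hzi (h' ▸ h), h.symm⟩
      refine DifferentiableAt.mul ?_ (by fun_prop)
      simp only [Matrix.vecMul, dotProduct]
      exact DifferentiableAt.fun_sum fun a _ => (vv_diff q a hzc).mul
        ((hΓ a b).differentiableAt (hO.mem_nhds hzO))
    · have hΓa : ∀ a, ExtAt (fun z => Γ z a b) (cs i) := fun a =>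
        .of_analytic ((hΓ a b).analyticAt (hO.mem_nhds (hcO i)))
      have hpw : ExtAt (fun z => (z - cs i) ^ Ld i b) (cs i) := .of_analytic (by fun_prop)
      by_cases hi : i = q.1
      · subst hi
        have h1 := ExtAt.sum Finset.univ fun (a : Fin N) _ =>
          (vv_ext hσ hO hDOσ hΓinv q a).mul (hΓa a)
        have h2 : ExtAt (fun z => if q.2.1 = b then (z - cs q.1) ^ (Ld q.1 b - (q.2.2.1 + 1)) else 0)
            (cs q.1) := by
          split_ifs
          · exact .of_analytic (by fun_prop)
          · exact .const 0
        refine ((h1.mul hpw).sub h2).congr ?_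
        filter_upwards [self_mem_nhdsWithin, nhdsWithin_le_nhds (hO.mem_nhds (hcO q.1))] with z hz hzO
        have hz0 : z - cs q.1 ≠ 0 := sub_ne_zero.2 hz
        have e1 : ∑ a, Γinv z q.2.1 a * Γ z a b = if q.2.1 = b then 1 else 0 := by
          rw [← Matrix.mul_apply, hmul' z hzO, Matrix.one_apply]
        simp only [add_mul, Finset.sum_add_distrib, Matrix.vecMul, dotProduct]
        have e2 : ∑ a, Γinv z q.2.1 a * ((z - cs q.1) ^ (q.2.2.1 + 1))⁻¹ * Γ z a b =
            (if q.2.1 = b then 1 else 0) * ((z - cs q.1) ^ (q.2.2.1 + 1))⁻¹ := by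
          rw [← e1, Finset.sum_mul]
          exact Finset.sum_congr rfl fun a _ => by ring
        rw [e2]
        split_ifs with hb
        · subst hb
          rw [pow_sub₀ _ hz0 (show q.2.2.1 + 1 ≤ Ld q.1 q.2.1 from q.2.2.2)]
          ring
        · ring
      · refine (ExtAt.sum Finset.univ fun (a : Fin N) _ => ExtAt.mul (f := fun z => vv cs σ Γinv q z a)
          (.of_analytic ?_) (hΓa a)).mul hpw
        have : DifferentiableOn ℂ (fun z => vv cs σ Γinv q z a) {cs q.1}ᶜ := fun z hz =>
          (vv_diff q a hz).differentiableWithinAt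
        refine this.analyticAt (isOpen_compl_singleton.mem_nhds fun h => ?_)
        exact notMem_other hdisj hi (mem_closedBall_self (hρ i).le)
          ((show cs i = cs q.1 from h) ▸ mem_closedBall_self (hρ q.1).le)
  choose F hFd hFe using hF
  -- `W p` is `w_p` in closed form, and `A p` is the Laurent coefficient of `v_q S` along `w_p`
  set W : (Σ i : Fin n, Σ ν : Fin N, Fin (Kd i ν)) → ℂ → Fin N → ℂ := fun p z b =>
    if b = p.2.1 then -((z - cs p.1) ^ (p.2.2.1 + 1))⁻¹ else 0 with hW
  set A : (Σ i : Fin n, Σ ν : Fin N, Fin (Kd i ν)) → ℂ := fun p =>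
    tc (cs p.1) (ρ p.1) (F p.1 p.2.1) (Kd p.1 p.2.1 - (p.2.2.1 + 1)) with hA
  -- `C₋[v_q S]` is minus the sum of the principal parts of `v_q S`
  have hlhs : ∀ z ∈ ExtOf n cs ρ, ∀ b, Cm N n cs ρ (fun ζ => Matrix.vecMul
          (Cm N n cs σ (fun ξ ν' => (Γinv ξ) q.2.1 ν' * ((ξ - cs q.1) ^ (q.2.2.1 + 1))⁻¹) ζ)
          (Γ ζ * Dloc N n cs ρ (fun i μ => (Ld i μ : ℤ) - (Kd i μ : ℤ)) ζ)) z b =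
        ∑ p, A p * W p z b := by
    intro z hz b
    have h1 : ∀ i, (2 * (Real.pi : ℂ) * I)⁻¹ * (∮ ζ in C(cs i, ρ i), Matrix.vecMul
          (Cm N n cs σ (fun ξ ν' => (Γinv ξ) q.2.1 ν' * ((ξ - cs q.1) ^ (q.2.2.1 + 1))⁻¹) ζ)
          (Γ ζ * Dloc N n cs ρ (fun i μ => (Ld i μ : ℤ) - (Kd i μ : ℤ)) ζ) b / (ζ - z)) =
        pp (cs i) (Kd i b) (tc (cs i) (ρ i) (F i b)) z := by
      intro i
      have := cm_pp (hρ i) (hU i) (hDU i) (hFd i b) (Kd i b) (extOf_notMem_closedBall hz i)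
      rw [← inv_mul_cancel_left₀ tpi_ne (pp _ _ _ z), ← this]
      congr 1
      refine circleIntegral.integral_congr (hρ i).le fun ζ hζ => ?_
      have hζ0 : ζ - cs i ≠ 0 := sub_ne_zero.2 (sphere_ne hζ (hρ i))
      rw [Cm_eq_vv hσ hdisjσ hO hDOσ hΓinv q (hsphE i ζ hζ), Dloc_sphere _ hdisj hζ,
        ← Matrix.vecMul_vecMul, Matrix.vecMul_diagonal, hFe i b ζ (sphere_ne hζ (hρ i)),
        zpow_sub₀ hζ0, zpow_natCast, zpow_natCast]
      ring
    rw [Cm, Finset.sum_congr rfl fun i _ => h1 i]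
    simp only [Fintype.sum_sigma, hA, hW]
    refine Finset.sum_congr rfl fun i _ => ?_
    rw [Finset.sum_eq_single_of_mem b (Finset.mem_univ b)]
    · simp only [if_true]
      rw [pp, Finset.sum_range, ← Finset.sum_neg_distrib, ← Equiv.sum_comp Fin.revPerm]
      refine Finset.sum_congr rfl fun k _ => ?_
      have e1 : Kd i b - (Fin.revPerm k).1 = k.1 + 1 := by
        rw [Fin.revPerm_apply, Fin.val_rev]; have := k.2; omega
      have e2 : (Fin.revPerm k).1 = Kd i b - (k.1 + 1) := by
        rw [Fin.revPerm_apply, Fin.val_rev]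
      rw [e1, e2]
      ring
    · intro ν _ hν
      simp [Ne.symm hν]
  have hWd : ∀ p b, DifferentiableOn ℂ (fun z => W p z b) (range cs)ᶜ := by
    intro p b
    simp only [hW]
    split_ifs
    · refine (DifferentiableOn.inv (by fun_prop) fun w hw => pow_ne_zero _ (sub_ne_zero.2 ?_)).neg
      rintro rfl
      exact hw (mem_range_self _)
    · exact differentiableOn_const _
  -- the expansion holds outside the larger disks only, whereas independence is assumed outside the
  -- smaller ones: continue analytically
  have hzero : ∀ b, ∀ z ∉ range cs, ∑ p, (g p - A p) * W p z b = 0 := by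
    intro b
    have hd : DifferentiableOn ℂ (fun z => ∑ p, (g p - A p) * W p z b) (range cs)ᶜ :=
      DifferentiableOn.fun_sum fun p _ => (hWd p b).const_mul _
    have han : AnalyticOnNhd ℂ (fun z => ∑ p, (g p - A p) * W p z b) (range cs)ᶜ := fun z hz =>
      hd.analyticAt ((isOpen_compl_range cs).mem_nhds hz)
    obtain ⟨z₀, hz₀⟩ := extOf_nonempty (cs := cs) (ρ := ρ)
    have hconn : IsPreconnected (range cs)ᶜ :=
      (Set.Countable.isConnected_compl_of_one_lt_rank (by simp)
        (finite_range cs).countable).isPreconnected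
    have hev : (fun z => ∑ p, (g p - A p) * W p z b) =ᶠ[nhds z₀] 0 := by
      filter_upwards [isOpen_extOf.mem_nhds hz₀] with z hz
      have h1 := congrFun (hG hz) b
      simp only at h1
      rw [hlhs z hz b, Finset.sum_apply] at h1
      have h2 : ∀ p, (g p • Cm N n cs σ (fun ζ ν' =>
            (if ν' = p.2.1 then ((ζ - cs p.1) ^ (p.2.2.1 + 1))⁻¹ else 0)) z) b = g p * W p z b := by
        intro p
        rw [Cm_w hσ hdisjσ p (hρσ hz)]
        rfl
      simp only [h2] at h1
      simp only [sub_mul, Finset.sum_sub_distrib, h1, sub_self, Pi.zero_apply]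
    exact han.eqOn_zero_of_preconnected_of_eventuallyEq_zero hconn (extOf_notMem hρ hz₀) hev
  have hgA : g p - A p = 0 := by
    refine Fintype.linearIndependent_iff.1 hwindep (fun p => g p - A p) ?_ p
    ext z b
    have := hzero b z.1 (extOf_notMem hσ z.2)
    simp only [Finset.sum_apply, Pi.smul_apply, Pi.zero_apply, smul_eq_mul]
    refine Eq.trans (Finset.sum_congr rfl fun p _ => ?_) this
    refine congrArg (fun x => (g p - A p) * x) ?_
    exact congrFun (Cm_w hσ hdisjσ p z.2) b
  rw [sub_eq_zero.1 hgA, hA]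
  simp only [tc]
  congr 1
  refine circleIntegral.integral_congr (hρ _).le fun z hz => ?_
  have hz0 : z - cs p.1 ≠ 0 := sub_ne_zero.2 (sphere_ne hz (hρ _))
  have hL0 : Ld p.1 p.2.1 = 0 := by
    have := p.2.2.pos
    rcases Nat.mul_eq_zero.1 (hLK p.1 p.2.1) with h | h
    · exact h
    · omega
  rw [hFe _ _ _ (sphere_ne hz (hρ _)), hL0, pow_zero, mul_one]
  congr 1
  rw [← zpow_natCast, ← zpow_neg]
  congr 1
  have := p.2.2.2
  omega

end Formula

end VarDet

/-! ### Dependence on the parameter -/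

namespace VarDet

open Metric Set Complex MeasureTheory

section Parameter

/-- Separate continuity in `z` and a locally bounded `t`-derivative give joint continuity. -/
lemma joint_cont {O : Set ℂ} {T : Set ℝ} (hO : IsOpen O) (hT : IsOpen T) {f f' : ℂ → ℝ → ℂ}
    (hf : ∀ t ∈ T, ContinuousOn (fun z => f z t) O)
    (hd : ∀ z ∈ O, ∀ t ∈ T, HasDerivAt (fun s => f z s) (f' z t) t)
    (hc : ContinuousOn (fun p : ℂ × ℝ => f' p.1 p.2) (O ×ˢ T)) :
    ContinuousOn (fun p : ℂ × ℝ => f p.1 p.2) (O ×ˢ T) := by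
  rintro ⟨z₀, t₀⟩ ⟨hz₀, ht₀⟩
  refine ContinuousAt.continuousWithinAt ?_
  have hOT : O ×ˢ T ∈ nhds (z₀, t₀) := (hO.prod hT).mem_nhds ⟨hz₀, ht₀⟩
  have hcat := hc.continuousAt hOT
  have hbd : ∀ᶠ p in nhds (z₀, t₀), ‖f' p.1 p.2‖ < ‖f' z₀ t₀‖ + 1 :=
    hcat.norm.eventually (gt_mem_nhds (by simp))
  obtain ⟨ε, hε, hsub⟩ := Metric.eventually_nhds_iff_ball.1 (hbd.and hOT)
  set C := ‖f' z₀ t₀‖ + 1 with hC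
  have hlip : ∀ p ∈ ball (z₀, t₀) ε, ‖f p.1 p.2 - f p.1 t₀‖ ≤ C * ‖p.2 - t₀‖ := by
    rintro ⟨z, t⟩ hp
    rw [← ball_prod_same] at hp
    refine (convex_ball t₀ ε).norm_image_sub_le_of_norm_hasDerivWithin_le (f := f z) (f' := f' z)
      (fun s hs => ?_) (fun s hs => ?_) (mem_ball_self hε) hp.2
    · have := hsub (z, s) (by rw [← ball_prod_same]; exact ⟨hp.1, hs⟩)
      exact (hd z this.2.1 s this.2.2).hasDerivWithinAt
    · have := hsub (z, s) (by rw [← ball_prod_same]; exact ⟨hp.1, hs⟩)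
      exact this.1.le
  have h1 : Tendsto (fun p : ℂ × ℝ => f p.1 p.2 - f p.1 t₀) (nhds (z₀, t₀)) (nhds 0) := by
    have hg : Tendsto (fun p : ℂ × ℝ => C * ‖p.2 - t₀‖) (nhds (z₀, t₀)) (nhds 0) := by
      have : ContinuousAt (fun p : ℂ × ℝ => C * ‖p.2 - t₀‖) (z₀, t₀) := by fun_prop
      simpa [ContinuousAt] using this
    refine squeeze_zero_norm' ?_ hg
    filter_upwards [ball_mem_nhds (z₀, t₀) hε] with p hp using hlip p hp
  have h2 : Tendsto (fun p : ℂ × ℝ => f p.1 t₀) (nhds (z₀, t₀)) (nhds (f z₀ t₀)) :=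
    (((hf t₀ ht₀).continuousAt (hO.mem_nhds hz₀)).tendsto).comp
      (continuous_fst.tendsto (z₀, t₀))
  simpa [ContinuousAt] using h1.add h2

lemma inv_joint_cont {N : ℕ} {S : Set (ℂ × ℝ)} {Γ Γinv : ℂ → ℝ → Mat N}
    (hc : ∀ a b, ContinuousOn (fun p : ℂ × ℝ => Γ p.1 p.2 a b) S)
    (hmul : ∀ p ∈ S, Γ p.1 p.2 * Γinv p.1 p.2 = 1) (a b : Fin N) :
    ContinuousOn (fun p : ℂ × ℝ => Γinv p.1 p.2 a b) S := by
  rw [continuousOn_iff_continuous_domRestrict]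
  have h1 : Continuous (fun p : S => Γ p.1.1 p.1.2) := continuous_matrix fun i j =>
    continuousOn_iff_continuous_domRestrict.1 (hc i j)
  have h3 : ∀ p : S, (Γ p.1.1 p.1.2).det ≠ 0 := fun p h => by
    have := congrArg Matrix.det (hmul p.1 p.2)
    rw [Matrix.det_mul, h, zero_mul, Matrix.det_one] at this
    exact zero_ne_one this
  have h4 : Continuous (fun p : S => ((Γ p.1.1 p.1.2).det)⁻¹ * (Γ p.1.1 p.1.2).adjugate a b) :=
    (h1.matrix_det.inv₀ h3).mul (h1.matrix_adjugate.matrix_elem a b)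
  convert h4 using 1
  ext p
  rw [Set.domRestrict_apply, ← Matrix.inv_eq_right_inv (hmul p.1 p.2), Matrix.inv_def,
    Matrix.smul_apply, smul_eq_mul, Ring.inverse_eq_inv']

lemma hasDerivAt_inv {N : ℕ} {T : Set ℝ} (hT : IsOpen T) {Γ Γinv dΓ : ℝ → Mat N}
    (hc : ∀ a b, ContinuousOn (fun s => Γinv s a b) T)
    (hmul : ∀ s ∈ T, Γ s * Γinv s = 1) (hmul' : ∀ s ∈ T, Γinv s * Γ s = 1)
    (hd : ∀ t ∈ T, ∀ a b, HasDerivAt (fun s => Γ s a b) (dΓ t a b) t) {t : ℝ} (ht : t ∈ T)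
    (a b : Fin N) : HasDerivAt (fun s => Γinv s a b) ((-(Γinv t * dΓ t * Γinv t)) a b) t := by
  rw [hasDerivAt_iff_tendsto_slope]
  have h : Tendsto (fun s => -∑ j, (∑ i, Γinv s a i * slope (fun s => Γ s i j) t s) * Γinv t j b)
      (nhdsWithin t {t}ᶜ) (nhds (-∑ j, (∑ i, Γinv t a i * dΓ t i j) * Γinv t j b)) := by
    refine (tendsto_finsetSum _ fun j _ => (tendsto_finsetSum _ fun i _ => ?_).mul_const _).neg
    exact ((((hc a i).continuousAt (hT.mem_nhds ht)).tendsto).mono_left nhdsWithin_le_nhds).mul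
      (hasDerivAt_iff_tendsto_slope.1 (hd t ht i j))
  have e0 : (-(Γinv t * dΓ t * Γinv t)) a b =
      -∑ j, (∑ i, Γinv t a i * dΓ t i j) * Γinv t j b := by
    simp only [Matrix.neg_apply, Matrix.mul_apply]
  rw [e0]
  refine h.congr' ?_
  filter_upwards [nhdsWithin_le_nhds (hT.mem_nhds ht)] with s hs
  have e1 : Γinv s - Γinv t = -(Γinv s * (Γ s - Γ t) * Γinv t) := by
    rw [mul_sub, sub_mul, hmul' s hs, one_mul, mul_assoc, hmul t ht, mul_one, neg_sub]
  have e2 := congrFun (congrFun e1 a) b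
  simp only [Matrix.sub_apply, Matrix.neg_apply, Matrix.mul_apply] at e2
  simp only [slope, vsub_eq_sub, e2, real_smul, Finset.mul_sum, Finset.sum_mul, mul_neg]
  exact congrArg _ (Finset.sum_congr rfl fun j _ => Finset.sum_congr rfl fun i _ => by ring)

/-- The `t`-derivative of a family of holomorphic functions is holomorphic. -/
lemma deriv_differentiableOn {O : Set ℂ} {T : Set ℝ} (hO : IsOpen O) (hT : IsOpen T)
    {f f' : ℂ → ℝ → ℂ} (hf : ∀ t ∈ T, DifferentiableOn ℂ (fun z => f z t) O)
    (hd : ∀ z ∈ O, ∀ t ∈ T, HasDerivAt (fun s => f z s) (f' z t) t)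
    (hc : ContinuousOn (fun p : ℂ × ℝ => f' p.1 p.2) (O ×ˢ T)) {t : ℝ} (ht : t ∈ T) :
    DifferentiableOn ℂ (fun z => f' z t) O := by
  intro z₀ hz₀
  obtain ⟨ε, hε, hb⟩ := nhds_basis_closedBall.mem_iff.1 (hO.mem_nhds hz₀)
  have hs : sphere z₀ ε ⊆ O := sphere_subset_closedBall.trans hb
  have hft : ContinuousOn (fun z => f' z t) O :=
    hc.comp (f := fun z => (z, t)) (by fun_prop) fun z hz => ⟨hz, ht⟩
  have hdisj : ∀ z ∈ ball z₀ ε, z ∉ sphere z₀ ε := fun z hz h => (mem_ball.1 hz).ne (mem_sphere.1 h)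
  have key : ∀ z ∈ ball z₀ ε, f' z t = (2 * (Real.pi : ℂ) * I)⁻¹ *
      ∮ ζ in C(z₀, ε), f' ζ t / (ζ - z) := by
    intro z hz
    have h1 : HasDerivAt (fun s => ∮ ζ in C(z₀, ε), f ζ s / (ζ - z))
        (∮ ζ in C(z₀, ε), f' ζ t / (ζ - z)) t := by
      refine hasDerivAt_circ (f := fun ζ s => f ζ s / (ζ - z)) (f' := fun ζ s => f' ζ s / (ζ - z))
        hε.le hT ?_ ?_ ?_ ht
      · intro s hs'
        exact ((hf s hs').continuousOn.mono hs).mul (contOn_invsub (hdisj z hz))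
      · refine (hc.mono (prod_mono_left hs)).mul
          ((contOn_invsub (hdisj z hz)).comp continuousOn_fst fun p hp => hp.1)
      · intro ζ hζ s hs'
        exact (hd ζ (hs hζ) s hs').div_const _
    have h2 := h1.const_mul (2 * (Real.pi : ℂ) * I)⁻¹
    refine (hd z (hb (ball_subset_closedBall hz)) t ht).unique (h2.congr_of_eventuallyEq ?_)
    filter_upwards [hT.mem_nhds ht] with s hs'
    rw [cauchy_formula hO hb (hf s hs') hz, inv_mul_cancel_left₀ tpi_ne]
  have h3 : DifferentiableOn ℂ (fun z => f' z t) (ball z₀ ε) :=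
    (((transform_diff hε.le (hft.mono hs)).mono hdisj).const_mul _).congr key
  exact (h3.differentiableAt (isOpen_ball.mem_nhds (mem_ball_self hε))).differentiableWithinAt

lemma circ_cont {c : ℂ} {ρ : ℝ} (hρ : 0 ≤ ρ) {T : Set ℝ} {f : ℂ → ℝ → ℂ}
    (hf : ContinuousOn (fun p : ℂ × ℝ => f p.1 p.2) (sphere c ρ ×ˢ T)) :
    ContinuousOn (fun s => ∮ z in C(c, ρ), f z s) T := by
  rw [continuousOn_iff_continuous_domRestrict]
  simp only [circleIntegral]
  refine intervalIntegral.continuous_parametric_intervalIntegral_of_continuous'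
    (f := fun (s : T) θ => deriv (circleMap c ρ) θ • f (circleMap c ρ θ) s) ?_ _ _
  have h1 : Continuous (fun p : T × ℝ => f (circleMap c ρ p.2) p.1) :=
    hf.comp_continuous (f := fun p : T × ℝ => (circleMap c ρ p.2, (p.1 : ℝ)))
      (((continuous_circleMap c ρ).comp continuous_snd).prodMk
        (continuous_subtype_val.comp continuous_fst))
      fun p => ⟨circleMap_mem_sphere c hρ _, p.1.2⟩
  have h2 : Continuous (fun p : T × ℝ => deriv (circleMap c ρ) p.2) := by
    simp only [deriv_circleMap]
    fun_prop
  exact h2.smul h1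

end Parameter

/-- Jacobi's formula, when the derivative of the matrix is `G M`. -/
lemma hasDerivAt_det {m : Type*} [Fintype m] [DecidableEq m] {G : ℝ → Matrix m m ℂ} {t : ℝ}
    {M : Matrix m m ℂ} (h : ∀ p q, HasDerivAt (fun s => G s p q) ((G t * M) p q) t) :
    HasDerivAt (fun s => (G s).det) ((G t).det * M.trace) t := by
  have h1 : HasDerivAt (fun s => (G s).det) (∑ τ : Equiv.Perm m, ((Equiv.Perm.sign τ : ℤ) : ℂ) *
      ∑ q, (∏ j ∈ Finset.univ.erase q, G t (τ j) j) • (G t * M) (τ q) q) t := by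
    simp only [Matrix.det_apply']
    refine HasDerivAt.fun_sum fun τ _ => HasDerivAt.const_mul _ ?_
    exact HasDerivAt.fun_finsetProd fun q _ => h (τ q) q
  convert h1 using 1
  have h2 : ∀ q, ((G t).updateCol q (fun p => (G t * M) p q)).det = (G t).det * M q q := by
    intro q
    have e1 : (fun p => (G t * M) p q) = (G t).mulVec (fun p => M p q) := rfl
    rw [← Matrix.cramer_apply, e1, Matrix.cramer_eq_adjugate_mulVec, Matrix.mulVec_mulVec,
      Matrix.adjugate_mul, Matrix.smul_mulVec, Matrix.one_mulVec]
    rfl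
  simp only [Matrix.trace, Matrix.diag, Finset.mul_sum, ← h2]
  rw [Finset.sum_comm]
  refine Finset.sum_congr rfl fun q _ => ?_
  rw [Matrix.det_apply']
  refine Finset.sum_congr rfl fun τ _ => ?_
  rw [← Finset.mul_prod_erase _ _ (Finset.mem_univ q), Matrix.updateCol_self, smul_eq_mul]
  rw [Finset.prod_congr rfl fun j hj => Matrix.updateCol_ne (Finset.ne_of_mem_erase hj)]
  ring

end VarDet

/-! ### Differentiation of the characteristic matrix -/

namespace VarDet

open Metric Set Complex MeasureTheory

section Derivative

variable {N n : ℕ} {cs : Fin n → ℂ} {σ : Fin n → ℝ} {Ld : Fin n → Fin N → ℕ}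

/-- The polar row of `A(t)` is continuously differentiable in `t`, with derivative the polar row
of `∂ₜA`. -/
lemma vv_hasDerivAt (hσ : ∀ i, 0 < σ i) {O : Set ℂ} {T : Set ℝ} (hT : IsOpen T)
    (hDO : ∀ i, closedBall (cs i) (σ i) ⊆ O) {A A' : ℂ → ℝ → Mat N}
    (hA : ∀ t ∈ T, ∀ a b, ContinuousOn (fun z => A z t a b) O)
    (hd : ∀ z ∈ O, ∀ t ∈ T, ∀ a b, HasDerivAt (fun s => A z s a b) (A' z t a b) t)
    (hc : ∀ a b, ContinuousOn (fun p : ℂ × ℝ => A' p.1 p.2 a b) (O ×ˢ T))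
    (q : Σ i : Fin n, Σ μ : Fin N, Fin (Ld i μ)) (z : ℂ) (b : Fin N) {t : ℝ} (ht : t ∈ T) :
    HasDerivAt (fun s => vv cs σ (fun z => A z s) q z b) (vv cs σ (fun z => A' z t) q z b) t := by
  simp only [vv, pp, tc]
  have hsp : sphere (cs q.1) (σ q.1) ⊆ O := sphere_subset_closedBall.trans (hDO _)
  refine (HasDerivAt.fun_sum fun j _ => HasDerivAt.mul_const (HasDerivAt.const_mul _ ?_) _).neg
  refine hasDerivAt_circ (f := fun ξ s => A ξ s q.2.1 b * ((ξ - cs q.1) ^ (j + 1))⁻¹)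
    (f' := fun ξ s => A' ξ s q.2.1 b * ((ξ - cs q.1) ^ (j + 1))⁻¹) (hσ _).le hT ?_ ?_ ?_ ht
  · exact fun s hs => ((hA s hs _ _).mono hsp).mul (contOn_invpow (hσ _) _)
  · exact ((hc _ _).mono (prod_mono_left hsp)).mul
      ((contOn_invpow (hσ _) _).comp continuousOn_fst fun p hp => hp.1)
  · exact fun ξ hξ s hs => (hd ξ (hsp hξ) s hs _ _).mul_const _

lemma vv_joint_cont (hσ : ∀ i, 0 < σ i) {O S : Set ℂ} {T : Set ℝ}
    (hDO : ∀ i, closedBall (cs i) (σ i) ⊆ O) (hS : S ⊆ (range cs)ᶜ) {A : ℂ → ℝ → Mat N}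
    (hc : ∀ a b, ContinuousOn (fun p : ℂ × ℝ => A p.1 p.2 a b) (O ×ˢ T))
    (q : Σ i : Fin n, Σ μ : Fin N, Fin (Ld i μ)) (b : Fin N) :
    ContinuousOn (fun p : ℂ × ℝ => vv cs σ (fun z => A z p.2) q p.1 b) (S ×ˢ T) := by
  simp only [vv, pp, tc]
  have hsp : sphere (cs q.1) (σ q.1) ⊆ O := sphere_subset_closedBall.trans (hDO _)
  refine (continuousOn_finsetSum _ fun j _ => (continuousOn_const.mul ?_).mul ?_).neg
  · refine (circ_cont (f := fun ξ s => A ξ s q.2.1 b * ((ξ - cs q.1) ^ (j + 1))⁻¹) (hσ _).le ?_).comp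
      continuousOn_snd fun p hp => hp.2
    exact ((hc _ _).mono (prod_mono_left hsp)).mul
      ((contOn_invpow (hσ _) _).comp continuousOn_fst fun p hp => hp.1)
  · refine ContinuousOn.inv₀ (by fun_prop) fun p hp => pow_ne_zero _ (sub_ne_zero.2 fun h => ?_)
    exact hS hp.1 (h ▸ mem_range_self _)

/-- Contour integrals of a polar row of `A(t)` times `B(t)` may be differentiated in `t` under the
integral sign, by the product rule. -/
lemma entry_hasDerivAt {c : ℂ} {ρ : ℝ} (hρ : 0 < ρ) (hσ : ∀ i, 0 < σ i) {O : Set ℂ} {T : Set ℝ}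
    (hT : IsOpen T) (hDO : ∀ i, closedBall (cs i) (σ i) ⊆ O) (hsO : sphere c ρ ⊆ O)
    (hsc : sphere c ρ ⊆ (range cs)ᶜ) {A A' B B' : ℂ → ℝ → Mat N}
    (hA : ∀ t ∈ T, ∀ a b, ContinuousOn (fun z => A z t a b) O)
    (hAd : ∀ z ∈ O, ∀ t ∈ T, ∀ a b, HasDerivAt (fun s => A z s a b) (A' z t a b) t)
    (hAc : ∀ a b, ContinuousOn (fun p : ℂ × ℝ => A p.1 p.2 a b) (O ×ˢ T))
    (hAc' : ∀ a b, ContinuousOn (fun p : ℂ × ℝ => A' p.1 p.2 a b) (O ×ˢ T))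
    (hB : ∀ t ∈ T, ∀ a b, ContinuousOn (fun z => B z t a b) O)
    (hBd : ∀ z ∈ O, ∀ t ∈ T, ∀ a b, HasDerivAt (fun s => B z s a b) (B' z t a b) t)
    (hBc : ∀ a b, ContinuousOn (fun p : ℂ × ℝ => B p.1 p.2 a b) (O ×ˢ T))
    (hBc' : ∀ a b, ContinuousOn (fun p : ℂ × ℝ => B' p.1 p.2 a b) (O ×ˢ T))
    (q : Σ i : Fin n, Σ μ : Fin N, Fin (Ld i μ)) (ν : Fin N) (m : ℤ) {t : ℝ} (ht : t ∈ T) :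
    HasDerivAt (fun s => ∮ z in C(c, ρ),
        (Matrix.vecMul (vv cs σ (fun z => A z s) q z) (B z s)) ν * (z - c) ^ m)
      (∮ z in C(c, ρ),
        (Matrix.vecMul (vv cs σ (fun z => A z t) q z) (B' z t) +
          Matrix.vecMul (vv cs σ (fun z => A' z t) q z) (B z t)) ν * (z - c) ^ m) t := by
  have hzc : ContinuousOn (fun z : ℂ => (z - c) ^ m) (sphere c ρ) :=
    ContinuousOn.zpow₀ (by fun_prop) m fun z hz => Or.inl (sub_ne_zero.2 (sphere_ne hz hρ))
  have hvjc := fun b => vv_joint_cont hσ hDO hsc hAc q b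
  have hdvjc := fun b => vv_joint_cont hσ hDO hsc hAc' q b
  have hsub : sphere c ρ ×ˢ T ⊆ O ×ˢ T := prod_mono_left hsO
  refine hasDerivAt_circ (f := fun z s =>
    (Matrix.vecMul (vv cs σ (fun z => A z s) q z) (B z s)) ν * (z - c) ^ m) (f' := fun z s =>
      (Matrix.vecMul (vv cs σ (fun z => A z s) q z) (B' z s) +
      Matrix.vecMul (vv cs σ (fun z => A' z s) q z) (B z s)) ν * (z - c) ^ m) hρ.le hT ?_ ?_ ?_ ht
  · intro s hs
    refine ContinuousOn.mul ?_ hzc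
    simp only [Matrix.vecMul, dotProduct]
    exact continuousOn_finsetSum _ fun b _ => ((hvjc b).comp (f := fun z => (z, s))
      (by fun_prop) fun z hz => ⟨hz, hs⟩).mul ((hB s hs _ _).mono hsO)
  · refine ContinuousOn.mul ?_ (hzc.comp continuousOn_fst fun x hx => hx.1)
    simp only [Matrix.vecMul, dotProduct, Pi.add_apply]
    exact (continuousOn_finsetSum _ fun b _ => (hvjc b).mul ((hBc' _ _).mono hsub)).add
      (continuousOn_finsetSum _ fun b _ => (hdvjc b).mul ((hBc _ _).mono hsub))
  · intro z hz s hs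
    refine HasDerivAt.mul_const ?_ _
    simp only [Matrix.vecMul, dotProduct, Pi.add_apply]
    rw [← Finset.sum_add_distrib]
    refine HasDerivAt.fun_sum fun b _ => ?_
    rw [add_comm]
    exact (vv_hasDerivAt hσ hT hDO hA hAd hAc' q z b hs).mul (hBd z (hsO hz) s hs _ _)

end Derivative

end VarDet

/-- **Variation of the determinant of the characteristic matrix under deformations
of `Γ`.**  Under the stated hypotheses (`Γ(z,t)` analytic in `z` near the disks,
`C¹` in `t`; `R(z,t)` an admissible dressing for each `t`, `C¹` in `t`; the
characteristic matrix `G(t)` defined by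
`C₋[v_{c,μ,ℓ}(·,t)·S(·,t)] = Σ G(t)_{(c′,ν,k),(c,μ,ℓ)}·w_{c′,ν,k}` with `G(t)`
invertible), the map `t ↦ det G(t)` is differentiable and
`(d/dt) log det G(t) = (1/2πi) ∮_{∂𝔻} Tr( R⁻¹·∂_z R·∂_t Γ·Γ⁻¹ ) dz`. -/
theorem variation_det_characteristic_matrix
    (N n : ℕ) (hN : 1 ≤ N)
    (cs : Fin n → ℂ) (hcs : Function.Injective cs)
    (r r' : Fin n → ℝ) (hr : ∀ i, 0 < r i) (hrr' : ∀ i, r i < r' i)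
    (hdisj : ∀ i j, i ≠ j → r' i + r' j < dist (cs i) (cs j))
    (O : Set ℂ) (hO : IsOpen O) (hDO : ∀ i, Metric.closedBall (cs i) (r' i) ⊆ O)
    (sa sb : ℝ)
    -- the exponents `N_c = L_c − K_c`, `L_c K_c = 0`, `Σ_c Tr N_c = 0`
    (Ld Kd : Fin n → Fin N → ℕ)
    (hLK : ∀ i μ, Ld i μ * Kd i μ = 0)
    (htr : (∑ i, ∑ μ, ((Ld i μ : ℤ) - (Kd i μ : ℤ))) = 0)
    -- `Γ(z,t)`, `Γ⁻¹` analytic in `z` on `O`, continuously differentiable in `t`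
    (Γ Γinv dΓ : ℂ → ℝ → Mat N)
    (hΓ : ∀ t ∈ Set.Ioo sa sb, ∀ i j : Fin N,
      AnalyticOnNhd ℂ (fun z => Γ z t i j) O)
    (hΓinv : ∀ t ∈ Set.Ioo sa sb, ∀ i j : Fin N,
      AnalyticOnNhd ℂ (fun z => Γinv z t i j) O)
    (hmul : ∀ z ∈ O, ∀ t ∈ Set.Ioo sa sb,
      Γ z t * Γinv z t = 1 ∧ Γinv z t * Γ z t = 1)
    (hdΓ : ∀ z ∈ O, ∀ t ∈ Set.Ioo sa sb, ∀ i j : Fin N,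
      HasDerivAt (fun s => Γ z s i j) (dΓ z t i j) t)
    (hdΓcont : ∀ i j : Fin N,
      ContinuousOn (fun p : ℂ × ℝ => dΓ p.1 p.2 i j) (O ×ˢ Set.Ioo sa sb))
    -- the admissible dressing `R(z,t)`, continuously differentiable in `t`
    (R Rinv R' dR : ℂ → ℝ → Mat N)
    (hRan : ∀ t ∈ Set.Ioo sa sb, ∀ z : ℂ, z ∉ Set.range cs → ∀ i j : Fin N,
      AnalyticAt ℂ (fun w => R w t i j) z)
    (hRinvan : ∀ t ∈ Set.Ioo sa sb, ∀ z : ℂ, z ∉ Set.range cs → ∀ i j : Fin N,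
      AnalyticAt ℂ (fun w => Rinv w t i j) z)
    (hRmul : ∀ t ∈ Set.Ioo sa sb, ∀ z : ℂ, z ∉ Set.range cs →
      R z t * Rinv z t = 1 ∧ Rinv z t * R z t = 1)
    (hRone : ∀ t ∈ Set.Ioo sa sb,
      Filter.Tendsto (fun z => R z t) (Bornology.cobounded ℂ) (nhds 1))
    (hRext : ∀ t ∈ Set.Ioo sa sb, ∀ i : Fin n, ∀ a b : Fin N,
      ExtAt (fun z => (R z t * Γ z t *
        Matrix.diagonal fun μ => (z - cs i) ^ ((Ld i μ : ℤ) - (Kd i μ : ℤ))) a b) (cs i))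
    (hRextinv : ∀ t ∈ Set.Ioo sa sb, ∀ i : Fin n, ∀ a b : Fin N,
      ExtAt (fun z =>
        ((Matrix.diagonal fun μ => (z - cs i) ^ ((Kd i μ : ℤ) - (Ld i μ : ℤ))) *
          Γinv z t * Rinv z t) a b) (cs i))
    (hR' : ∀ t ∈ Set.Ioo sa sb, ∀ z : ℂ, z ∉ Set.range cs → ∀ i j : Fin N,
      HasDerivAt (fun w => R w t i j) (R' z t i j) z)
    (hdR : ∀ z : ℂ, z ∉ Set.range cs → ∀ t ∈ Set.Ioo sa sb, ∀ i j : Fin N,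
      HasDerivAt (fun s => R z s i j) (dR z t i j) t)
    (hdRcont : ∀ z : ℂ, z ∉ Set.range cs → ∀ i j : Fin N,
      ContinuousOn (fun s => dR z s i j) (Set.Ioo sa sb))
    -- the basis elements `v_{c,μ,ℓ}(z,t) = C₋[e_μᵀ Γ(·,t)⁻¹ (·−c)^{−ℓ}](z)`
    -- and `w_{c,ν,k}(z) = C₋[e_νᵀ (·−c)^{−k}](z)`, linearly independent
    (hvindep : ∀ t ∈ Set.Ioo sa sb,
      LinearIndependent ℂ (fun q : Σ i : Fin n, Σ μ : Fin N, Fin (Ld i μ) =>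
        (ExtOf n cs r).restrict (fun z =>
          Cm N n cs r (fun ζ ν' => (Γinv ζ t) q.2.1 ν' *
            ((ζ - cs q.1) ^ (q.2.2.1 + 1))⁻¹) z)))
    (hwindep :
      LinearIndependent ℂ (fun p : Σ i : Fin n, Σ ν : Fin N, Fin (Kd i ν) =>
        (ExtOf n cs r).restrict (fun z =>
          Cm N n cs r (fun ζ ν' => (if ν' = p.2.1 then ((ζ - cs p.1) ^ (p.2.2.1 + 1))⁻¹ else 0)) z)))
    -- the (square) characteristic matrix `G(t)` and the expansion
    -- `C₋[v_{c,μ,ℓ}(·,t)·S(·,t)] = Σ_{(c′,ν,k)} G(t)·w_{c′,ν,k}`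
    (e : (Σ i : Fin n, Σ ν : Fin N, Fin (Kd i ν)) ≃ (Σ i : Fin n, Σ μ : Fin N, Fin (Ld i μ)))
    (G : ℝ → Matrix (Σ i : Fin n, Σ ν : Fin N, Fin (Kd i ν))
                    (Σ i : Fin n, Σ ν : Fin N, Fin (Kd i ν)) ℂ)
    (hG : ∀ t ∈ Set.Ioo sa sb, ∀ q : Σ i : Fin n, Σ ν : Fin N, Fin (Kd i ν),
      Set.EqOn
        (fun z => Cm N n cs r' (fun ζ => Matrix.vecMul
          (Cm N n cs r (fun ξ ν' => (Γinv ξ t) (e q).2.1 ν' *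
            ((ξ - cs (e q).1) ^ ((e q).2.2.1 + 1))⁻¹) ζ)
          (Γ ζ t * Dloc N n cs r' (fun i μ => (Ld i μ : ℤ) - (Kd i μ : ℤ)) ζ)) z)
        (fun z => ∑ p : Σ i : Fin n, Σ ν : Fin N, Fin (Kd i ν),
          G t p q • Cm N n cs r (fun ζ ν' =>
            (if ν' = p.2.1 then ((ζ - cs p.1) ^ (p.2.2.1 + 1))⁻¹ else 0)) z)
        (ExtOf n cs r'))
    (hGinv : ∀ t ∈ Set.Ioo sa sb, (G t).det ≠ 0) :
    -- conclusion: `t ↦ det G(t)` is differentiable and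
    -- `(d/dt) log det G(t) = (1/2πi)∮_{∂𝔻} Tr(R⁻¹ ∂_z R ∂_t Γ Γ⁻¹) dz`
    ∀ t ∈ Set.Ioo sa sb, ∃ d : ℂ,
      HasDerivAt (fun s => (G s).det) d t ∧
      d = (G t).det * ((2 * (Real.pi : ℂ) * Complex.I)⁻¹ *
        ∑ i, ∮ z in C(cs i, r' i),
          Matrix.trace (Rinv z t * R' z t * dΓ z t * Γinv z t)) := by
  intro t ht
  have hT : IsOpen (Set.Ioo sa sb) := isOpen_Ioo
  have hρ : ∀ i, 0 < r' i := fun i => (hr i).trans (hrr' i)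
  have hDOr : ∀ i, Metric.closedBall (cs i) (r i) ⊆ O := fun i =>
    (Metric.closedBall_subset_closedBall (hrr' i).le).trans (hDO i)
  have hΓd : ∀ t ∈ Set.Ioo sa sb, ∀ a b, DifferentiableOn ℂ (fun z => Γ z t a b) O :=
    fun t ht a b => (hΓ t ht a b).differentiableOn
  have hΓid : ∀ t ∈ Set.Ioo sa sb, ∀ a b, DifferentiableOn ℂ (fun z => Γinv z t a b) O :=
    fun t ht a b => (hΓinv t ht a b).differentiableOn
  have hΓjc : ∀ a b, ContinuousOn (fun p : ℂ × ℝ => Γ p.1 p.2 a b) (O ×ˢ Set.Ioo sa sb) :=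
    fun a b => VarDet.joint_cont hO hT (f := fun z s => Γ z s a b) (f' := fun z s => dΓ z s a b)
      (fun t ht => (hΓd t ht a b).continuousOn) (fun z hz t ht => hdΓ z hz t ht a b) (hdΓcont a b)
  have hΓijc : ∀ a b, ContinuousOn (fun p : ℂ × ℝ => Γinv p.1 p.2 a b) (O ×ˢ Set.Ioo sa sb) :=
    VarDet.inv_joint_cont hΓjc fun p hp => (hmul p.1 hp.1 p.2 hp.2).1
  have hdΓd : ∀ a b, DifferentiableOn ℂ (fun z => dΓ z t a b) O := fun a b =>
    VarDet.deriv_differentiableOn hO hT (f := fun z s => Γ z s a b) (f' := fun z s => dΓ z s a b)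
      (fun t ht => hΓd t ht a b) (fun z hz t ht => hdΓ z hz t ht a b) (hdΓcont a b) ht
  set dΓinv : ℂ → ℝ → Mat N := fun z s => -(Γinv z s * dΓ z s * Γinv z s) with hdΓinv
  have hdΓi : ∀ z ∈ O, ∀ t ∈ Set.Ioo sa sb, ∀ a b,
      HasDerivAt (fun s => Γinv z s a b) (dΓinv z t a b) t := fun z hz t ht a b =>
    VarDet.hasDerivAt_inv hT
      (fun a b => (hΓijc a b).comp (f := fun s => (z, s)) (by fun_prop) fun s hs => ⟨hz, hs⟩)
      (fun s hs => (hmul z hz s hs).1) (fun s hs => (hmul z hz s hs).2)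
      (fun s hs => hdΓ z hz s hs) ht a b
  have hdΓijc : ∀ a b, ContinuousOn (fun p : ℂ × ℝ => dΓinv p.1 p.2 a b) (O ×ˢ Set.Ioo sa sb) := by
    intro a b
    simp only [hdΓinv, Matrix.neg_apply, Matrix.mul_apply]
    exact (continuousOn_finsetSum _ fun j _ => (continuousOn_finsetSum _ fun i _ =>
      (hΓijc _ _).mul (hdΓcont _ _)).mul (hΓijc _ _)).neg
  obtain ⟨M, hMtr, hM⟩ := VarDet.core (Kd := Kd) hcs hr hrr' hdisj hLK hO hDO (hΓd t ht) (hΓid t ht) hdΓd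
    (fun z => rfl : ∀ z, dΓinv z t = _) (fun z hz => (hmul z hz t ht).1)
    (fun z hz => (hmul z hz t ht).2)
    (fun a b z hz => (hRan t ht z hz a b).differentiableAt.differentiableWithinAt)
    (fun a b z hz => (hRinvan t ht z hz a b).continuousAt.continuousWithinAt)
    (fun z hz => (hRmul t ht z hz).2) (hRone t ht) (hRext t ht) (hR' t ht)
  have hGf : ∀ s ∈ Set.Ioo sa sb, ∀ p q, G s p q = (2 * (Real.pi : ℂ) * Complex.I)⁻¹ *
      ∮ z in C(cs p.1, r' p.1),
        (Matrix.vecMul (VarDet.vv cs r (fun z => Γinv z s) (e q) z) (Γ z s)) p.2.1 *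
          (z - cs p.1) ^ ((p.2.2.1 : ℤ) - (Kd p.1 p.2.1 : ℤ)) := fun s hs p q =>
    VarDet.G_formula hr hrr' hdisj hLK hO hDO (hΓd s hs) (hΓid s hs)
      (fun z hz => (hmul z hz s hs).2) hwindep (e q) (fun p => G s p q) (hG s hs q) p
  have hsph : ∀ i, Metric.sphere (cs i) (r' i) ⊆ (Set.range cs)ᶜ := fun i z hz =>
    VarDet.sphere_notMem hρ hdisj hz
  have hsphO : ∀ i, Metric.sphere (cs i) (r' i) ⊆ O := fun i =>
    Metric.sphere_subset_closedBall.trans (hDO i)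
  have hGd : ∀ p q, HasDerivAt (fun s => G s p q) ((G t * M.submatrix e e) p q) t := by
    intro p q
    set m : ℤ := (p.2.2.1 : ℤ) - (Kd p.1 p.2.1 : ℤ) with hm
    have hint := VarDet.entry_hasDerivAt (hρ p.1) hr hT hDOr (hsphO p.1) (hsph p.1)
      (fun s hs a b => (hΓid s hs a b).continuousOn) hdΓi hΓijc hdΓijc
      (fun s hs a b => (hΓd s hs a b).continuousOn) hdΓ hΓjc hdΓcont (e q) p.2.1 m ht
    have h1 := hint.const_mul (2 * (Real.pi : ℂ) * Complex.I)⁻¹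
    have h2 : (G t * M.submatrix e e) p q = (2 * (Real.pi : ℂ) * Complex.I)⁻¹ *
        ∮ z in C(cs p.1, r' p.1),
          (Matrix.vecMul (VarDet.vv cs r (fun z => Γinv z t) (e q) z) (dΓ z t) +
          Matrix.vecMul (VarDet.vv cs r (fun z => dΓinv z t) (e q) z) (Γ z t)) p.2.1 *
            (z - cs p.1) ^ m := by
      rw [hM p (e q), Matrix.mul_apply, Finset.mul_sum, ← Equiv.sum_comp e]
      refine Finset.sum_congr rfl fun q' _ => ?_
      rw [hGf t ht, Matrix.submatrix_apply]
      ring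
    rw [h2]
    refine h1.congr_of_eventuallyEq ?_
    filter_upwards [hT.mem_nhds ht] with s hs using hGf s hs p q
  refine ⟨_, VarDet.hasDerivAt_det hGd, ?_⟩
  have htr' : (M.submatrix e e).trace = M.trace := Equiv.sum_comp e fun q => M q q
  rw [htr', hMtr]

end
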